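/- arXiv:1911.11969 — 3 statements merged into one kernel-verified Lean document; each statement's English description precedes it below -/
import Mathlib

section
/- Fix an integer k ≥ 1 and let b_n^{(k)} denote the n-th element, in increasing order, of the set of positive integers that are products of exactly k distinct primes. Then for every ε with 0 < ε < 1/(2k+1) and every τ ∈ ℝ there is N₀ = N₀(τ,ε) such that for all N ≥ N₀ there exists a choice of signs (s_1,…,s_N) ∈ {−1,1}^N with |Σ_{n=1}^N s_n/b_n^{(k)} − τ| < exp(−N^{1/(2k+1)−ε}). -/
/-!
Write `b n` for the `n`-th product of `k` distinct primes, `θ = 1 / (2k + 1) - ε`, `M = ⌊N / 2⌋` and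
`V = {M + 1, …, N}`.  The signs with index at most `M` are chosen greedily (`greedy`): since
`∑ 1 / b n` diverges (`not_summable_nth`) and `b n ≤ n ^ (5/4)` for large `n` (`nth_le_rpow`, from
Chebyshev's bound), the partial sum can be kept within `M ^ (-3/4)` of `τ`.  Let `t` be the remaining
error, to be matched by a signed sum over `V`.

For `A > 0` consider `I = ∫ e ^ (-A ξ²) cos (ξ t) ∏_{n ∈ V} cos (ξ / b n) dξ`.  Expanding the product
of cosines, `I` is the average over signs `s` of `√(π / A) e ^ (-(S - t)² / (4A))`, where
`S = ∑_{n ∈ V} s n / b n`; so some choice of signs has this value at least `I`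
(`exists_signs_of_integral`).  With `A = e ^ (-2 N ^ θ) / N ^ 2`, a lower bound for `I` by a positive
constant forces `|S - t| < e ^ (-N ^ θ)` (`final_numeric`).

The lower bound (`core`) is obtained in three ranges, with `R = N ^ (7/10)` and `Z = N ^ θ'`,
where `θ' = θ + ε / 2`.
* For `|ξ| ≤ R` all the arguments of the cosines are at most `1`, as `b n ≥ N / 2` on `V` and
  `R |t| ≤ 1`.  The integrand is nonnegative there, and at least `1 / 8` on `[-1, 1]`.
* For `R < |ξ| ≤ e ^ Z` the product of cosines is at most `e ^ (-2Z)`.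
* For `|ξ| > e ^ Z` the Gaussian weight is negligible.

The middle range is where the arithmetic of `b n` and the exponent `1 / (2k + 1)` enter.  Up to
`|ξ| = N / 2` each cosine is bounded directly (`prod_cos_near`).  Beyond that, put `x = ξ / π` and call
`n` bad if `x / b n` is within `w` of an integer.  Then some multiple `m` of `b n` satisfies
`|m - x| ≤ w B`, where `B = N ^ (1 + δ)` bounds all `b n`.  There are at most `2 w B + 1` such `m`, and
as `m ≤ e ^ Z` has at most `2Z` prime factors, it has at most `(2Z) ^ k` divisors of the form `b n`
(`card_bad_le`).  Taking `w = N ^ (-κ)` with `κ` slightly above `k θ'`, at most `N / 4` indices are bad,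
and each of the at least `N / 4` others contributes a factor at most `e ^ (-2 w²)`
(`prod_cos_far`).  This suffices as soon as `4Z ≤ N w²`, that is, `θ' < 1 - 2κ ≈ 1 - 2 k θ'`.
-/

open Filter Real

/-! ### Products of `k` distinct primes -/

/-- `m` is a product of exactly `k` distinct primes. The body is the predicate enumerated in the
theorem, so that the two are definitionally equal. -/
def IsKPrime (k m : ℕ) : Prop := Squarefree m ∧ m.primeFactors.card = k

lemma IsKPrime.mul_prime {j Q p : ℕ} (hQ : IsKPrime j Q) (hp : p.Prime) (h : Q < p) :
    IsKPrime (j + 1) (Q * p) := by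
  have hQ0 : Q ≠ 0 := hQ.1.ne_zero
  have hnd : ¬ p ∣ Q := fun hd => absurd (Nat.le_of_dvd (Nat.pos_of_ne_zero hQ0) hd) (by omega)
  have hc : Nat.Coprime Q p := ((Nat.Prime.coprime_iff_not_dvd hp).2 hnd).symm
  refine ⟨(Nat.squarefree_mul hc).2 ⟨hQ.1, hp.squarefree⟩, ?_⟩
  rw [hc.primeFactors_mul, Finset.card_union_of_disjoint hc.disjoint_primeFactors, hQ.2,
    hp.primeFactors, Finset.card_singleton]

lemma exists_isKPrime (j : ℕ) : ∃ Q, IsKPrime j Q := by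
  induction j with
  | zero => exact ⟨1, squarefree_one, by simp⟩
  | succ j ih =>
    obtain ⟨Q, hQ⟩ := ih
    obtain ⟨p, hp, hpp⟩ := Nat.exists_infinite_primes (Q + 1)
    exact ⟨Q * p, hQ.mul_prime hpp (by omega)⟩

/-- A fixed `Q`, a product of `k - 1` distinct primes, turns every larger prime `p` into a member `Q * p`
of the sequence. This carries the size and density of the primes over to the sequence. -/
lemma exists_multiplier {k : ℕ} (hk : 1 ≤ k) :
    ∃ Q, 0 < Q ∧ ∀ p : ℕ, p.Prime → Q < p → IsKPrime k (Q * p) := by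
  obtain ⟨j, rfl⟩ := Nat.exists_eq_add_of_le' hk
  obtain ⟨Q, hQ⟩ := exists_isKPrime j
  exact ⟨Q, Nat.pos_of_ne_zero hQ.1.ne_zero, fun p hp h => hQ.mul_prime hp h⟩

lemma infinite_isKPrime {k : ℕ} (hk : 1 ≤ k) : (Set.ofPred (IsKPrime k)).Infinite := by
  obtain ⟨Q, hQ0, hQ⟩ := exists_multiplier hk
  refine Set.infinite_of_not_bddAbove ?_
  rintro ⟨C, hC⟩
  obtain ⟨p, hp, hpp⟩ := Nat.exists_infinite_primes (Q + C + 1)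
  have h1 : Q * p ≤ C := hC (hQ p hpp (by omega))
  nlinarith

/-- The reciprocals diverge because those of the members `Q * p` already do, by Euler's theorem on
`∑ 1 / p`. -/
lemma not_summable_nth {k : ℕ} (hk : 1 ≤ k) :
    ¬ Summable (fun n : ℕ => 1 / (Nat.nth (IsKPrime k) n : ℝ)) := by
  classical
  obtain ⟨Q, hQ0, hQ⟩ := exists_multiplier hk
  intro hs
  have hinf := infinite_isKPrime hk
  apply not_summable_one_div_on_primes
  rw [← summable_nat_add_iff (Q + 1)]
  set f : ℕ → ℝ := fun n => 1 / (Nat.nth (IsKPrime k) n : ℝ)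
  -- The primes beyond `Q` embed into the indices of the sequence by `p ↦ Q * p`.
  have hs2 : Summable (fun q : {p : ℕ // p.Prime ∧ Q < p} =>
      f (Nat.count (IsKPrime k) (Q * q.1))) := by
    refine hs.comp_injective (i := fun q : {p : ℕ // p.Prime ∧ Q < p} =>
      Nat.count (IsKPrime k) (Q * q.1)) ?_
    intro q r h
    have h1 := congrArg (Nat.nth (IsKPrime k)) h
    simp only at h1
    rw [Nat.nth_count (hQ _ q.2.1 q.2.2), Nat.nth_count (hQ _ r.2.1 r.2.2)] at h1
    exact Subtype.ext (Nat.eq_of_mul_eq_mul_left hQ0 h1)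
  have hs3 : Summable (fun q : {p : ℕ // p.Prime ∧ Q < p} => 1 / (q.1 : ℝ)) := by
    refine (hs2.mul_left (Q : ℝ)).congr ?_
    intro q
    have hq : (q.1 : ℝ) ≠ 0 := by exact_mod_cast q.2.1.ne_zero
    have hQ' : (Q : ℝ) ≠ 0 := by exact_mod_cast hQ0.ne'
    simp only [f]
    rw [Nat.nth_count (hQ _ q.2.1 q.2.2)]
    push_cast
    field_simp
  have hs4 := (summable_subtype_iff_indicator (s := {p : ℕ | p.Prime ∧ Q < p})
    (f := fun n : ℕ => 1 / (n : ℝ))).1 hs3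
  rw [← summable_nat_add_iff (Q + 1)] at hs4
  refine hs4.congr ?_
  intro n
  simp only [Set.indicator, Set.mem_ofPred_eq]
  have : Q < n + (Q + 1) := by omega
  simp [this]

lemma eventually_mul_rpow_le (C : ℝ) {a c : ℝ} (h : a < c) :
    ∀ᶠ N : ℕ in atTop, C * (N : ℝ) ^ a ≤ (N : ℝ) ^ c := by
  have h1 : Tendsto (fun N : ℕ => (N : ℝ) ^ (c - a)) atTop atTop :=
    (tendsto_rpow_atTop (by linarith)).comp tendsto_natCast_atTop_atTop
  filter_upwards [h1.eventually_ge_atTop C, eventually_gt_atTop 0] with N hN hN0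
  have hN0' : (0 : ℝ) < N := by exact_mod_cast hN0
  calc C * (N : ℝ) ^ a ≤ (N : ℝ) ^ (c - a) * (N : ℝ) ^ a := by gcongr
    _ = (N : ℝ) ^ c := by rw [← rpow_add hN0']; congr 1; ring

lemma eventually_log_le {a : ℝ} (C : ℝ) (ha : 0 < a) :
    ∀ᶠ N : ℕ in atTop, C * Real.log N ≤ (N : ℝ) ^ a := by
  have h := ((isLittleO_log_rpow_atTop ha).comp_tendsto tendsto_natCast_atTop_atTop)
  have h2 := h.def (c := 1 / (|C| + 1)) (by positivity)
  filter_upwards [h2, eventually_ge_atTop 1] with N hN hN0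
  have hN0' : (1 : ℝ) ≤ N := by exact_mod_cast hN0
  have hl := Real.log_nonneg hN0'
  have hp : 0 ≤ (N : ℝ) ^ a := by positivity
  simp only [Function.comp, Real.norm_eq_abs, abs_of_nonneg hl, abs_of_nonneg hp] at hN
  have h3 : (|C| + 1) * Real.log N ≤ (N : ℝ) ^ a := by
    rw [div_mul_eq_mul_div, one_mul, le_div_iff₀ (by positivity)] at hN
    linarith
  have := le_abs_self C
  nlinarith

/-- Up to `Q * y` there are at least `π(y) - (Q + 1)` products of `k` distinct primes, namely the `Q * p`
with `Q < p ≤ y`. -/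
lemma count_lower {k Q : ℕ} [DecidablePred (IsKPrime k)] (hQ0 : 0 < Q)
    (hQ : ∀ p : ℕ, p.Prime → Q < p → IsKPrime k (Q * p)) (y : ℕ) :
    Nat.primeCounting y ≤ Nat.count (IsKPrime k) (Q * y + 1) + (Q + 1) := by
  rw [Nat.primeCounting, Nat.primeCounting', Nat.count_eq_card_filter_range,
    Nat.count_eq_card_filter_range]
  have h1 : (Finset.range (y + 1)).filter Nat.Prime ⊆
      ((Finset.range (y + 1)).filter (fun p => Nat.Prime p ∧ Q < p)) ∪ Finset.range (Q + 1) := by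
    intro p hp
    simp only [Finset.mem_union, Finset.mem_filter, Finset.mem_range] at hp ⊢
    by_cases h : Q < p
    · left; exact ⟨hp.1, hp.2, h⟩
    · right; omega
  refine (Finset.card_le_card h1).trans ((Finset.card_union_le _ _).trans ?_)
  rw [Finset.card_range]
  refine Nat.add_le_add_right ?_ _
  refine Finset.card_le_card_of_injOn (fun p => Q * p) ?_ ?_
  · intro p hp
    simp only [Finset.coe_filter, Finset.mem_range, Set.mem_ofPred_eq] at hp ⊢
    exact ⟨by nlinarith, hQ p hp.2.1 hp.2.2⟩
  · intro p _ q _ h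
    exact Nat.eq_of_mul_eq_mul_left hQ0 h

/-- The `n`-th product of `k` primes is `O(n ^ (1 + δ))`, by Chebyshev's lower bound for `π`. -/
lemma nth_le_rpow {k : ℕ} (hk : 1 ≤ k) {δ : ℝ} (hδ : 0 < δ) :
    ∀ᶠ n : ℕ in atTop, (Nat.nth (IsKPrime k) (n - 1) : ℝ) ≤ (n : ℝ) ^ (1 + δ) := by
  classical
  obtain ⟨Q, hQ0, hQ⟩ := exists_multiplier hk
  have hQ0' : (0 : ℝ) < Q := by exact_mod_cast hQ0
  -- the cut-off `y ≈ n ^ (1 + δ / 2)` leaves room for the factors `Q` and `log y`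
  have e1 := eventually_mul_rpow_le (2 * Q) (show 1 + δ / 2 < 1 + δ by linarith)
  filter_upwards [e1, eventually_log_le (16 * (Q + 4) * (1 + δ)) (show 0 < δ / 2 by linarith),
    eventually_ge_atTop (2 * Q + 16)] with n h1 h2 h3
  have hn0 : (16 : ℝ) ≤ n := by exact_mod_cast (by omega : 16 ≤ n)
  set z : ℝ := (n : ℝ) ^ (1 + δ / 2) with hz
  set y : ℕ := ⌊z⌋₊ with hy
  have hzn : (n : ℝ) ≤ z := by
    conv_lhs => rw [← rpow_one (n : ℝ)]
    exact rpow_le_rpow_of_exponent_le (by linarith) (by linarith)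
  have hz0 : 0 ≤ z := by linarith
  have hyz : (y : ℝ) ≤ z := Nat.floor_le hz0
  have hyz2 : z - 1 < (y : ℝ) := by have := Nat.lt_floor_add_one z; linarith
  have hy15 : (15 : ℝ) < y := by linarith
  have hlogn : 0 < Real.log n := Real.log_pos (by linarith)
  have hlogy0 : 0 < Real.log y := Real.log_pos (by linarith)
  have hlogy : Real.log y ≤ (1 + δ) * Real.log n := by
    calc Real.log y ≤ Real.log z := Real.log_le_log (by linarith) hyz
      _ = (1 + δ / 2) * Real.log n := by rw [hz, Real.log_rpow (by linarith)]
      _ ≤ _ := by gcongr; linarith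
  have hpi := Chebyshev.pi_ge y
  rw [div_le_iff₀ hlogy0] at hpi
  have hl2 : (0.69 : ℝ) < Real.log 2 := by linarith [Real.log_two_gt_d9]
  have hlog1 : Real.log (y + 1) ≤ y / 4 + 1 := by
    have h4 : Real.log ((y + 1) / 4) ≤ (y + 1) / 4 - 1 :=
      Real.log_le_sub_one_of_pos (by linarith)
    rw [Real.log_div (by linarith) (by norm_num)] at h4
    have : Real.log 4 = 2 * Real.log 2 := by
      rw [show (4 : ℝ) = 2 ^ 2 by norm_num, Real.log_pow]; norm_num
    have := Real.log_two_lt_d9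
    linarith
  have hsplit : z = n * (n : ℝ) ^ (δ / 2) := by
    rw [hz, rpow_add (by linarith), rpow_one]
  have hcount := count_lower hQ0 hQ y
  have hcount' : (Nat.primeCounting y : ℝ) ≤ (Nat.count (IsKPrime k) (Q * y + 1) : ℝ) + (Q + 1) := by
    exact_mod_cast hcount
  have hlt : n - 1 < Nat.count (IsKPrime k) (Q * y + 1) := by
    by_contra hcon
    have hc2 : (Nat.count (IsKPrime k) (Q * y + 1) : ℝ) ≤ n := by
      exact_mod_cast (by omega : Nat.count (IsKPrime k) (Q * y + 1) ≤ n)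
    have hp2 : (Nat.primeCounting y : ℝ) ≤ n * (Q + 4) := by nlinarith
    have : (Nat.primeCounting y : ℝ) * Real.log y ≤ n * (Q + 4) * ((1 + δ) * Real.log n) := by
      gcongr
    have h5 : n * (16 * (Q + 4) * (1 + δ) * Real.log n) ≤ z := by
      rw [hsplit]; gcongr
    nlinarith
  have h6 := Nat.nth_lt_of_lt_count hlt
  have h7 : (Nat.nth (IsKPrime k) (n - 1) : ℝ) ≤ Q * y := by
    exact_mod_cast (by omega : Nat.nth (IsKPrime k) (n - 1) ≤ Q * y)
  nlinarith

/-! ### Greedy approximation by the first half -/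

/-- Greedy choice of signs: each new term is given the sign that pulls the partial sum towards `τ`,
which replaces the error `D` by `|D - a n|`. Divergence of `∑ a n` makes the error eventually drop
below `φ`, and since `a ≤ φ` and `φ` decreases no faster than `a`, it stays there. -/
lemma greedy {a φ : ℕ → ℝ} {n₁ : ℕ} (hpos : ∀ n, 1 ≤ n → 0 < a n) (hdiv : ¬ Summable a)
    (haφ : ∀ n, n₁ ≤ n → a n ≤ φ n) (hφ : ∀ n, n₁ ≤ n → φ n - φ (n + 1) ≤ a (n + 1)) (τ : ℝ) :
    ∃ N₀ : ℕ, ∀ M : ℕ, N₀ ≤ M → ∃ s : ℕ → ℝ, (∀ n, s n = 1 ∨ s n = -1) ∧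
      |(∑ n ∈ Finset.Icc 1 M, s n * a n) - τ| ≤ φ M := by
  have ext : ∀ (M : ℕ) (s : ℕ → ℝ), (∀ n, s n = 1 ∨ s n = -1) → ∃ s' : ℕ → ℝ,
      (∀ n, s' n = 1 ∨ s' n = -1) ∧
      |(∑ n ∈ Finset.Icc 1 (M + 1), s' n * a n) - τ| =
        |(|(∑ n ∈ Finset.Icc 1 M, s n * a n) - τ|) - a (M + 1)| := by
    intro M s hs
    set D := (∑ n ∈ Finset.Icc 1 M, s n * a n) - τ with hD
    have key : ∀ e : ℝ, (∑ n ∈ Finset.Icc 1 (M + 1), Function.update s (M + 1) e n * a n) - τ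
        = D + e * a (M + 1) := by
      intro e
      rw [Finset.sum_Icc_succ_top (by omega), Function.update_self, hD]
      have : ∑ n ∈ Finset.Icc 1 M, Function.update s (M + 1) e n * a n
          = ∑ n ∈ Finset.Icc 1 M, s n * a n := by
        refine Finset.sum_congr rfl fun n hn => ?_
        rw [Finset.mem_Icc] at hn
        rw [Function.update_of_ne (by omega)]
      rw [this]; ring
    have hupd : ∀ e : ℝ, (e = 1 ∨ e = -1) →
        ∀ n, Function.update s (M + 1) e n = 1 ∨ Function.update s (M + 1) e n = -1 := by
      intro e he n
      by_cases h : n = M + 1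
      · subst h; simpa using he
      · rw [Function.update_of_ne h]; exact hs n
    rcases le_total 0 D with h | h
    · refine ⟨_, hupd (-1) (Or.inr rfl), ?_⟩
      rw [key, abs_of_nonneg h]; congr 1; ring
    · refine ⟨_, hupd 1 (Or.inl rfl), ?_⟩
      rw [key, abs_of_nonpos h, ← abs_neg]; congr 1; ring
  have step : ∀ M, n₁ ≤ M → (∃ s : ℕ → ℝ, (∀ n, s n = 1 ∨ s n = -1) ∧
      |(∑ n ∈ Finset.Icc 1 M, s n * a n) - τ| ≤ φ M) →
      ∃ s : ℕ → ℝ, (∀ n, s n = 1 ∨ s n = -1) ∧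
      |(∑ n ∈ Finset.Icc 1 (M + 1), s n * a n) - τ| ≤ φ (M + 1) := by
    rintro M hM ⟨s, hs, h⟩
    obtain ⟨s', hs', h'⟩ := ext M s hs
    refine ⟨s', hs', ?_⟩
    rw [h', abs_le]
    have h1 := haφ (M + 1) (by omega)
    have h2 := hφ M hM
    have h3 := abs_nonneg ((∑ n ∈ Finset.Icc 1 M, s n * a n) - τ)
    constructor <;> linarith
  suffices h : ∃ N₀, n₁ ≤ N₀ ∧ ∃ s : ℕ → ℝ, (∀ n, s n = 1 ∨ s n = -1) ∧
      |(∑ n ∈ Finset.Icc 1 N₀, s n * a n) - τ| ≤ φ N₀ by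
    obtain ⟨N₀, hN, h⟩ := h
    refine ⟨N₀, fun M hM => ?_⟩
    induction M, hM using Nat.le_induction with
    | base => exact h
    | succ M hM ih => exact step M (by omega) ih
  -- Otherwise the greedy error never drops below the current term, hence decreases to `-∞`.
  by_contra hno
  push Not at hno
  apply hdiv
  set D₀ := |(∑ n ∈ Finset.Icc 1 n₁, (1 : ℝ) * a n) - τ|
  have hdec : ∀ M, n₁ ≤ M → ∃ s : ℕ → ℝ, (∀ n, s n = 1 ∨ s n = -1) ∧
      |(∑ n ∈ Finset.Icc 1 M, s n * a n) - τ| ≤ D₀ - ∑ n ∈ Finset.Ioc n₁ M, a n := by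
    intro M hM
    induction M, hM using Nat.le_induction with
    | base => exact ⟨fun _ => 1, fun _ => Or.inl rfl, by simp [D₀]⟩
    | succ M hM ih =>
      obtain ⟨s, hs, h⟩ := ih
      obtain ⟨s', hs', h'⟩ := ext M s hs
      refine ⟨s', hs', ?_⟩
      have h1 := hno (M + 1) (by omega) s' hs'
      have h2 := haφ (M + 1) (by omega)
      rw [h'] at h1 ⊢
      have h3 : (∑ n ∈ Finset.Ioc n₁ (M + 1), a n) =
          (∑ n ∈ Finset.Ioc n₁ M, a n) + a (M + 1) := by
        rw [← Finset.insert_Ioc_right_eq_Ioc_add_one hM, Finset.sum_insert (by simp), add_comm]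
      rw [h3]
      have h4 := abs_nonneg ((∑ n ∈ Finset.Icc 1 M, s n * a n) - τ)
      rcases abs_cases (|(∑ n ∈ Finset.Icc 1 M, s n * a n) - τ| - a (M + 1)) with hc | hc
      · rw [hc.1]; linarith
      · exfalso
        rw [hc.1] at h1
        linarith
  rw [← summable_nat_add_iff (n₁ + 1)]
  refine summable_of_sum_range_le (c := D₀) (fun n => (hpos _ (by omega)).le) ?_
  intro n
  obtain ⟨s, -, h⟩ := hdec (n₁ + n) (by omega)
  have h4 := abs_nonneg ((∑ n ∈ Finset.Icc 1 (n₁ + n), s n * a n) - τ)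
  have h5 : ∑ i ∈ Finset.range n, a (i + (n₁ + 1)) = ∑ n ∈ Finset.Ioc n₁ (n₁ + n), a n := by
    rw [← Finset.Ico_add_one_add_one_eq_Ioc, Finset.sum_Ico_eq_sum_range]
    refine Finset.sum_congr (by congr 1; omega) fun i _ => by congr 1; omega
  linarith

/-! ### The Gaussian integral and averaging over signs -/

lemma integrable_gauss_cos {A : ℝ} (hA : 0 < A) (u : ℝ) :
    MeasureTheory.Integrable (fun ξ : ℝ => rexp (-A * ξ ^ 2) * cos (ξ * u)) := by
  refine (integrable_exp_neg_mul_sq hA).mono' (by fun_prop) (MeasureTheory.ae_of_all _ fun ξ => ?_)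
  rw [norm_mul, Real.norm_eq_abs, Real.norm_eq_abs, abs_of_pos (exp_pos _)]
  exact mul_le_of_le_one_right (exp_pos _).le (abs_cos_le_one _)

/-- The Fourier transform of a Gaussian, in real form. -/
lemma integral_gauss_cos {A : ℝ} (hA : 0 < A) (u : ℝ) :
    ∫ ξ : ℝ, rexp (-A * ξ ^ 2) * cos (ξ * u) = √(π / A) * rexp (-u ^ 2 / (4 * A)) := by
  have h := integral_cexp_quadratic (b := -(A : ℂ)) (by simpa using hA) (Complex.I * u) 0
  have hre := congrArg Complex.re h
  have hint : MeasureTheory.Integrable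
      (fun x : ℝ => Complex.exp (-(A : ℂ) * x ^ 2 + Complex.I * u * x + 0)) := by
    refine (integrable_exp_neg_mul_sq hA).mono' (by fun_prop) (MeasureTheory.ae_of_all _ fun ξ => ?_)
    rw [Complex.norm_exp]
    apply le_of_eq
    congr 1
    simp [← Complex.ofReal_pow]
  rw [show ((∫ x : ℝ, Complex.exp (-(A : ℂ) * x ^ 2 + Complex.I * u * x + 0)).re) =
    ∫ x : ℝ, (Complex.exp (-(A : ℂ) * x ^ 2 + Complex.I * u * x + 0)).re from
      (integral_re (𝕜 := ℂ) hint).symm] at hre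
  have e1 : ∀ x : ℝ, (Complex.exp (-(A : ℂ) * x ^ 2 + Complex.I * u * x + 0)).re =
      rexp (-A * x ^ 2) * cos (x * u) := by
    intro x
    rw [Complex.exp_re]
    simp [← Complex.ofReal_pow, mul_comm]
  simp_rw [e1] at hre
  rw [hre]
  have e2 : ((π : ℂ) / -(-(A : ℂ))) ^ (1 / 2 : ℂ) = ((√(π / A) : ℝ) : ℂ) := by
    rw [neg_neg, Real.sqrt_eq_rpow, Complex.ofReal_cpow (by positivity)]
    push_cast; rfl
  have e3 : (0 : ℂ) - (Complex.I * u) ^ 2 / (4 * -(A : ℂ)) = ((-u ^ 2 / (4 * A) : ℝ) : ℂ) := by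
    rw [mul_pow, Complex.I_sq]
    push_cast
    have : (A : ℂ) ≠ 0 := by exact_mod_cast hA.ne'
    field_simp; ring
  rw [e2, e3, ← Complex.ofReal_exp, ← Complex.ofReal_mul, Complex.ofReal_re]

lemma integrable_gauss_prod {A : ℝ} (hA : 0 < A) (V : Finset ℕ) (a : ℕ → ℝ) (t : ℝ) :
    MeasureTheory.Integrable
      (fun ξ : ℝ => rexp (-A * ξ ^ 2) * (cos (ξ * t) * ∏ n ∈ V, cos (ξ * a n))) := by
  refine (integrable_exp_neg_mul_sq hA).mono' (by fun_prop) (MeasureTheory.ae_of_all _ fun ξ => ?_)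
  rw [norm_mul, Real.norm_eq_abs, Real.norm_eq_abs, abs_of_pos (exp_pos _), abs_mul,
    Finset.abs_prod]
  refine mul_le_of_le_one_right (exp_pos _).le ?_
  exact mul_le_one₀ (abs_cos_le_one _) (Finset.prod_nonneg fun _ _ => abs_nonneg _)
    (Finset.prod_le_one (fun _ _ => abs_nonneg _) fun _ _ => abs_cos_le_one _)

/-- The right-hand side, averaged over all signs on `V`, equals the left-hand side. The induction on `V`
peels off one cosine by `cos (ξ t) cos (ξ c) = (cos (ξ (t - c)) + cos (ξ (t + c))) / 2`
and keeps the better of the two signs. -/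
lemma exists_signs_of_integral {A : ℝ} (hA : 0 < A) (V : Finset ℕ) (a : ℕ → ℝ) (t : ℝ) :
    ∃ s : ℕ → ℝ, (∀ n, s n = 1 ∨ s n = -1) ∧
      ∫ ξ : ℝ, rexp (-A * ξ ^ 2) * (cos (ξ * t) * ∏ n ∈ V, cos (ξ * a n)) ≤
        √(π / A) * rexp (-((∑ n ∈ V, s n * a n) - t) ^ 2 / (4 * A)) := by
  classical
  induction V using Finset.induction_on generalizing t with
  | empty =>
    refine ⟨fun _ => 1, fun _ => Or.inl rfl, ?_⟩
    simp [← integral_gauss_cos hA t]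
  | insert m V hm ih =>
    have e : ∀ ξ : ℝ, rexp (-A * ξ ^ 2) * (cos (ξ * t) * ∏ n ∈ insert m V, cos (ξ * a n)) =
        (1 / 2) * (rexp (-A * ξ ^ 2) * (cos (ξ * (t - a m)) * ∏ n ∈ V, cos (ξ * a n)) +
          rexp (-A * ξ ^ 2) * (cos (ξ * (t + a m)) * ∏ n ∈ V, cos (ξ * a n))) := by
      intro ξ
      rw [Finset.prod_insert hm, mul_sub ξ t, mul_add ξ t, cos_sub, cos_add]
      ring
    simp_rw [e]
    rw [MeasureTheory.integral_const_mul, MeasureTheory.integral_add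
      (integrable_gauss_prod hA V a _) (integrable_gauss_prod hA V a _)]
    have upd : ∀ (c : ℝ), (c = 1 ∨ c = -1) → ∀ s : ℕ → ℝ, (∀ n, s n = 1 ∨ s n = -1) →
        ∃ s' : ℕ → ℝ, (∀ n, s' n = 1 ∨ s' n = -1) ∧
          (∑ n ∈ insert m V, s' n * a n) - t = (∑ n ∈ V, s n * a n) - (t - c * a m) := by
      intro c hc s hs
      refine ⟨Function.update s m c, fun n => ?_, ?_⟩
      · by_cases h : n = m
        · subst h; simpa using hc
        · rw [Function.update_of_ne h]; exact hs n
      · rw [Finset.sum_insert hm, Function.update_self]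
        have : ∑ n ∈ V, Function.update s m c n * a n = ∑ n ∈ V, s n * a n := by
          refine Finset.sum_congr rfl fun n hn => ?_
          rw [Function.update_of_ne (by rintro rfl; exact hm hn)]
        rw [this]; ring
    obtain ⟨s1, hs1, h1⟩ := ih (t - a m)
    obtain ⟨s2, hs2, h2⟩ := ih (t + a m)
    obtain ⟨s1', hs1', e1⟩ := upd 1 (Or.inl rfl) s1 hs1
    obtain ⟨s2', hs2', e2⟩ := upd (-1) (Or.inr rfl) s2 hs2
    rw [one_mul] at e1
    rw [neg_one_mul, sub_neg_eq_add] at e2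
    rw [← e1] at h1
    rw [← e2] at h2
    rcases le_total (√(π / A) * rexp (-((∑ n ∈ insert m V, s1' n * a n) - t) ^ 2 / (4 * A)))
      (√(π / A) * rexp (-((∑ n ∈ insert m V, s2' n * a n) - t) ^ 2 / (4 * A))) with h | h
    · exact ⟨s2', hs2', by linarith⟩
    · exact ⟨s1', hs1', by linarith⟩

lemma one_sub_sum_le_prod (V : Finset ℕ) (x : ℕ → ℝ) (h0 : ∀ n ∈ V, 0 ≤ x n)
    (h1 : ∀ n ∈ V, x n ≤ 1) : 1 - ∑ n ∈ V, x n ≤ ∏ n ∈ V, (1 - x n) := by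
  classical
  induction V using Finset.induction_on with
  | empty => simp
  | insert m V hm ih =>
    rw [Finset.sum_insert hm, Finset.prod_insert hm]
    have i := ih (fun n hn => h0 n (Finset.mem_insert_of_mem hn))
      (fun n hn => h1 n (Finset.mem_insert_of_mem hn))
    have a0 := h0 m (Finset.mem_insert_self _ _)
    have a1 := h1 m (Finset.mem_insert_self _ _)
    have s0 : 0 ≤ ∑ n ∈ V, x n :=
      Finset.sum_nonneg fun n hn => h0 n (Finset.mem_insert_of_mem hn)
    nlinarith

/-- If the product of cosines is at most `Z` for `R < |ξ| ≤ X`, then some signed sum over `V` is close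
to `t`. The three terms on the left come from the ranges `|ξ| ≤ R`, `R < |ξ| ≤ X` and `X < |ξ|` of the
integral in `exists_signs_of_integral`. -/
lemma core {A R X Z t : ℝ} {V : Finset ℕ} {a : ℕ → ℝ} (hA : 0 < A) (hA1 : A ≤ 1 / 2)
    (hR : 1 ≤ R) (hX : 0 ≤ X) (hZ : 0 ≤ Z)
    (ha0 : ∀ n ∈ V, 0 ≤ a n) (haR : ∀ n ∈ V, R * a n ≤ 1) (ht : R * |t| ≤ 1)
    (hsq : ∑ n ∈ V, a n ^ 2 ≤ 1)
    (hmid : ∀ ξ : ℝ, R < |ξ| → |ξ| ≤ X → |∏ n ∈ V, cos (ξ * a n)| ≤ Z) :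
    ∃ s : ℕ → ℝ, (∀ n, s n = 1 ∨ s n = -1) ∧
      1 / 4 - 2 * X * Z - √(π / (A / 2)) * rexp (-(A * X ^ 2 / 2)) ≤
        √(π / A) * rexp (-((∑ n ∈ V, s n * a n) - t) ^ 2 / (4 * A)) := by
  obtain ⟨s, hs, h⟩ := exists_signs_of_integral hA V a t
  refine ⟨s, hs, le_trans ?_ h⟩
  have hcosnn : ∀ ξ : ℝ, |ξ| ≤ R → 0 ≤ cos (ξ * t) * ∏ n ∈ V, cos (ξ * a n) := by
    intro ξ hξ
    have hc : ∀ u : ℝ, R * |u| ≤ 1 → 0 ≤ cos (ξ * u) := by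
      intro u hu
      have : |ξ * u| ≤ 1 := by
        rw [abs_mul]
        exact le_trans (by gcongr) hu
      have h3 := Real.pi_gt_three
      rw [abs_le] at this
      exact cos_nonneg_of_mem_Icc ⟨by linarith, by linarith⟩
    refine mul_nonneg (hc t ht) (Finset.prod_nonneg fun n hn => hc _ ?_)
    rw [abs_of_nonneg (ha0 n hn)]
    exact haR n hn
  have hmain : ∀ ξ : ℝ, |ξ| ≤ 1 →
      1 / 8 ≤ rexp (-A * ξ ^ 2) * (cos (ξ * t) * ∏ n ∈ V, cos (ξ * a n)) := by
    intro ξ hξ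
    have hξ2 : ξ ^ 2 ≤ 1 := by rw [← sq_abs]; nlinarith [abs_nonneg ξ]
    have b1 : 1 / 2 ≤ rexp (-A * ξ ^ 2) := by
      have := Real.add_one_le_exp (-A * ξ ^ 2)
      nlinarith [sq_nonneg ξ]
    have b2 : 1 / 2 ≤ cos (ξ * t) := by
      have h4 := Real.one_sub_sq_div_two_le_cos (x := ξ * t)
      have : |t| ≤ 1 := by nlinarith [abs_nonneg t]
      have h5 : t ^ 2 ≤ 1 := by rw [← sq_abs]; nlinarith [abs_nonneg t]
      rw [mul_pow] at h4
      nlinarith [sq_nonneg ξ, sq_nonneg t]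
    have b3 : 1 / 2 ≤ ∏ n ∈ V, cos (ξ * a n) := by
      have hx : ∀ n ∈ V, (ξ * a n) ^ 2 / 2 ≤ a n ^ 2 / 2 := fun n _ => by
        rw [mul_pow]; nlinarith [sq_nonneg (a n)]
      have hx1 : ∀ n ∈ V, (ξ * a n) ^ 2 / 2 ≤ 1 := fun n hn => by
        have h6 : a n ≤ 1 := by nlinarith [haR n hn, ha0 n hn]
        have := hx n hn
        nlinarith [ha0 n hn]
      have h7 := one_sub_sum_le_prod V (fun n => (ξ * a n) ^ 2 / 2)
        (fun n _ => by positivity) hx1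
      have h8 : ∏ n ∈ V, (1 - (ξ * a n) ^ 2 / 2) ≤ ∏ n ∈ V, cos (ξ * a n) :=
        Finset.prod_le_prod (fun n hn => by linarith [hx1 n hn])
          fun n _ => Real.one_sub_sq_div_two_le_cos
      have h9 : ∑ n ∈ V, (ξ * a n) ^ 2 / 2 ≤ ∑ n ∈ V, a n ^ 2 / 2 := Finset.sum_le_sum hx
      rw [← Finset.sum_div _ (fun n => a n ^ 2)] at h9
      linarith
    have b4 : 1 / 2 * (1 / 2) ≤ cos (ξ * t) * ∏ n ∈ V, cos (ξ * a n) := by gcongr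
    calc (1 : ℝ) / 8 = 1 / 2 * (1 / 2 * (1 / 2)) := by norm_num
      _ ≤ _ := by gcongr
  -- Minorant: a bump on `[-1, 1]`, minus the bounds on `R < |ξ| ≤ X` and on `X < |ξ|`.
  set g : ℝ → ℝ := fun ξ => (Set.Icc (-1 : ℝ) 1).indicator (fun _ => (1 / 8 : ℝ)) ξ -
    (Set.Icc (-X) X).indicator (fun _ => Z) ξ - rexp (-(A / 2) * ξ ^ 2) * rexp (-(A * X ^ 2 / 2))
    with hg
  have i1 : MeasureTheory.Integrable ((Set.Icc (-1 : ℝ) 1).indicator (fun _ => (1 / 8 : ℝ))) :=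
    (MeasureTheory.integrableOn_const (by simp)).integrable_indicator measurableSet_Icc
  have i2 : MeasureTheory.Integrable ((Set.Icc (-X) X).indicator (fun _ => Z)) :=
    (MeasureTheory.integrableOn_const (by simp)).integrable_indicator measurableSet_Icc
  have i3 : MeasureTheory.Integrable
      (fun ξ : ℝ => rexp (-(A / 2) * ξ ^ 2) * rexp (-(A * X ^ 2 / 2))) :=
    (integrable_exp_neg_mul_sq (by linarith)).mul_const _
  have hgint : ∫ ξ, g ξ = 1 / 4 - 2 * X * Z - √(π / (A / 2)) * rexp (-(A * X ^ 2 / 2)) := by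
    have e1 := MeasureTheory.integral_sub (i1.sub i2) i3
    have e2 := MeasureTheory.integral_sub i1 i2
    simp only [Pi.sub_apply] at e1
    rw [hg, e1, e2, MeasureTheory.integral_indicator measurableSet_Icc,
      MeasureTheory.integral_indicator measurableSet_Icc, MeasureTheory.integral_mul_const,
      integral_gaussian]
    simp only [MeasureTheory.integral_const, MeasureTheory.measureReal_restrict_apply_univ,
      Real.volume_real_Icc, smul_eq_mul]
    rw [max_eq_left (by norm_num), max_eq_left (by linarith)]
    ring
  rw [← hgint]
  refine MeasureTheory.integral_mono ((i1.sub i2).sub i3) (integrable_gauss_prod hA V a t) ?_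
  intro ξ
  have hE := exp_pos (-A * ξ ^ 2)
  have hE1 : rexp (-A * ξ ^ 2) ≤ 1 := by
    rw [Real.exp_le_one_iff]; nlinarith [sq_nonneg ξ]
  have hprod1 : |∏ n ∈ V, cos (ξ * a n)| ≤ 1 := by
    rw [Finset.abs_prod]
    exact Finset.prod_le_one (fun _ _ => abs_nonneg _) fun _ _ => abs_cos_le_one _
  have habs : |cos (ξ * t) * ∏ n ∈ V, cos (ξ * a n)| ≤ |∏ n ∈ V, cos (ξ * a n)| := by
    rw [abs_mul]
    exact mul_le_of_le_one_left (abs_nonneg _) (abs_cos_le_one _)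
  have hneg := neg_abs_le (cos (ξ * t) * ∏ n ∈ V, cos (ξ * a n))
  have hT : 0 < rexp (-(A / 2) * ξ ^ 2) * rexp (-(A * X ^ 2 / 2)) := by positivity
  have hI1 : 0 ≤ (Set.Icc (-X) X).indicator (fun _ => Z) ξ :=
    Set.indicator_nonneg (fun _ _ => hZ) ξ
  by_cases hξR : |ξ| ≤ R
  · have hf : 0 ≤ rexp (-A * ξ ^ 2) * (cos (ξ * t) * ∏ n ∈ V, cos (ξ * a n)) :=
      mul_nonneg hE.le (hcosnn ξ hξR)
    by_cases h1 : |ξ| ≤ 1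
    · have := hmain ξ h1
      simp only [hg, Set.indicator_of_mem (Set.mem_Icc.2 (abs_le.1 h1))]
      linarith
    · simp only [hg, Set.indicator_of_notMem (fun h => h1 (abs_le.2 (Set.mem_Icc.1 h)))]
      linarith
  · have h1 : ¬ |ξ| ≤ 1 := fun h => hξR (h.trans hR)
    simp only [hg, Set.indicator_of_notMem (fun h => h1 (abs_le.2 (Set.mem_Icc.1 h)))]
    by_cases h2 : |ξ| ≤ X
    · have h3 := hmid ξ (not_le.1 hξR) h2
      rw [Set.indicator_of_mem (Set.mem_Icc.2 (abs_le.1 h2))]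
      nlinarith
    · have h3 : rexp (-A * ξ ^ 2) ≤ rexp (-(A / 2) * ξ ^ 2) * rexp (-(A * X ^ 2 / 2)) := by
        rw [← Real.exp_add, Real.exp_le_exp]
        have : X ^ 2 ≤ ξ ^ 2 := by
          rw [← sq_abs ξ]; exact pow_le_pow_left₀ hX (not_le.1 h2).le 2
        nlinarith
      nlinarith

/-! ### Decay of the product of cosines -/

lemma abs_cos_le_exp_of_abs_le {u : ℝ} (hu : |u| ≤ 1 / 2) : |cos (π * u)| ≤ rexp (-2 * u ^ 2) := by
  have h1 := Real.mul_abs_le_abs_sin (x := π * u) (by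
    rw [abs_mul, abs_of_pos pi_pos]; nlinarith [pi_pos])
  rw [abs_mul, abs_of_pos pi_pos] at h1
  have h2 : 2 / π * (π * |u|) = 2 * |u| := by field_simp
  rw [h2] at h1
  have h3 := sin_sq_add_cos_sq (π * u)
  have h4 : (2 * |u|) ^ 2 ≤ sin (π * u) ^ 2 := by
    rw [← sq_abs (sin _)]; exact pow_le_pow_left₀ (by positivity) h1 2
  rw [mul_pow, sq_abs] at h4
  have h5 := Real.add_one_le_exp (-4 * u ^ 2)
  refine abs_le_of_sq_le_sq ?_ (exp_pos _).le
  rw [← Real.exp_nat_mul]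
  push_cast
  rw [show (2 : ℝ) * (-2 * u ^ 2) = -4 * u ^ 2 by ring]
  linarith

/-- `|cos (π u)|` is bounded in terms of the distance from `u` to the nearest integer. -/
lemma abs_cos_le_exp (u : ℝ) : |cos (π * u)| ≤ rexp (-2 * (u - round u) ^ 2) := by
  have h := abs_cos_le_exp_of_abs_le (abs_sub_round u)
  refine le_trans (le_of_eq ?_) h
  rw [mul_sub, mul_comm π (round u : ℝ), Real.cos_sub_int_mul_pi, abs_mul, abs_neg_one_zpow, one_mul]

lemma card_primeFactors_le {m : ℕ} (hm : m ≠ 0) {Z : ℝ} (h : (m : ℝ) ≤ rexp Z) :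
    (m.primeFactors.card : ℝ) ≤ 2 * Z := by
  have h1 : 2 ^ m.primeFactors.card ≤ m := by
    refine le_trans ?_ (Nat.le_of_dvd (Nat.pos_of_ne_zero hm) (Nat.prod_primeFactors_dvd m))
    exact Finset.pow_card_le_prod _ _ _ fun p hp => (Nat.prime_of_mem_primeFactors hp).two_le
  have h2 : (2 : ℝ) ^ m.primeFactors.card ≤ rexp Z := le_trans (by exact_mod_cast h1) h
  have h3 := Real.log_le_log (by positivity) h2
  rw [Real.log_pow, Real.log_exp] at h3
  have := Real.log_two_gt_d9
  have h4 : (0 : ℝ) ≤ m.primeFactors.card := by positivity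
  nlinarith

/-- A divisor of `m` that is a product of `k` distinct primes is determined by a `k`-element subset of the
prime factors of `m`. -/
lemma card_divisors_le {k m : ℕ} (hm : m ≠ 0) {ι : Type*} (T : Finset ι) {b : ι → ℕ}
    (hb : ∀ n ∈ T, IsKPrime k (b n)) (hinj : Set.InjOn b T) (hd : ∀ n ∈ T, b n ∣ m) :
    T.card ≤ m.primeFactors.card ^ k := by
  classical
  refine le_trans ?_ (Nat.choose_le_pow m.primeFactors.card k)
  rw [← Finset.card_powersetCard]
  refine Finset.card_le_card_of_injOn (fun n => (b n).primeFactors) ?_ ?_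
  · intro n hn
    rw [Finset.mem_coe, Finset.mem_powersetCard]
    exact ⟨Nat.primeFactors_mono (hd n hn) hm, (hb n hn).2⟩
  · intro n hn l hl h
    apply hinj hn hl
    rw [← Nat.prod_primeFactors_of_squarefree (hb n hn).1,
      ← Nat.prod_primeFactors_of_squarefree (hb l hl).1]
    simp only at h
    rw [h]

/-- Few `n` have `x / b n` within `w` of an integer `j`: for such `n` the integer `j * b n`
lies within `w * B` of `x`, and by `card_divisors_le` each integer in that window is a multiple of at
most `(2 * Z) ^ k` of the `b n`. -/
lemma card_bad_le {k : ℕ} {V : Finset ℕ} {b : ℕ → ℕ} {B w x Z : ℝ}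
    (hb : ∀ n ∈ V, IsKPrime k (b n)) (hinj : Set.InjOn b V) (hB : ∀ n ∈ V, (b n : ℝ) ≤ B)
    (hB0 : 0 ≤ B) (hw : 0 ≤ w) (hwx : w * B ≤ x / 2) (hx : 0 < x) (hZ : 0 ≤ Z)
    (hxZ : 2 * x ≤ rexp Z) :
    ((V.filter fun n => |x / b n - round (x / b n)| < w).card : ℝ) ≤
      (2 * (w * B) + 1) * (2 * Z) ^ k := by
  classical
  set T := V.filter fun n => |x / b n - round (x / b n)| < w with hT
  have hmem : ∀ n ∈ T, ∃ m : ℕ, m ∈ Finset.Icc ⌈x - w * B⌉₊ ⌊x + w * B⌋₊ ∧ b n ∣ m := by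
    intro n hn
    rw [hT, Finset.mem_filter] at hn
    obtain ⟨hnV, hn⟩ := hn
    have hb0 : (0 : ℝ) < b n := by
      exact_mod_cast Nat.pos_of_ne_zero (hb n hnV).1.ne_zero
    have h1 : |x - round (x / b n) * b n| ≤ w * B := by
      have : x - round (x / b n) * b n = (x / b n - round (x / b n)) * b n := by
        field_simp
      rw [this, abs_mul, abs_of_pos hb0]
      exact mul_le_mul hn.le (hB n hnV) hb0.le hw
    have h0 : 0 ≤ round (x / b n) := by
      have : (0 : ℝ) ≤ x / b n := by positivity
      rw [round_eq]
      exact Int.floor_nonneg.2 (by linarith)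
    obtain ⟨j, hj⟩ := Int.eq_ofNat_of_zero_le h0
    rw [hj, abs_le] at h1
    simp only [Int.cast_natCast] at h1
    refine ⟨j * b n, ?_, Dvd.intro_left j rfl⟩
    rw [Finset.mem_Icc]
    constructor
    · rw [Nat.ceil_le]; push_cast; linarith
    · apply Nat.le_floor; push_cast; linarith
  choose! f hf hfd using hmem
  have hfib : ∀ m ∈ Finset.Icc ⌈x - w * B⌉₊ ⌊x + w * B⌋₊,
      (T.filter fun n => f n = m).card ≤ ⌊(2 * Z) ^ k⌋₊ := by
    intro m hm
    rw [Finset.mem_Icc, Nat.ceil_le] at hm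
    have hm1 : (m : ℝ) ≤ x + w * B := (Nat.le_floor_iff (by positivity)).1 hm.2
    have hm0 : m ≠ 0 := by
      rintro rfl
      simp only [CharP.cast_eq_zero] at hm
      linarith
    apply Nat.le_floor
    have h2 := card_divisors_le (k := k) hm0 (T.filter fun n => f n = m) (b := b)
      (fun n hn => hb n (Finset.mem_filter.1 (Finset.mem_filter.1 hn).1).1)
      (hinj.mono fun n hn => (Finset.mem_filter.1 (Finset.mem_filter.1 hn).1).1)
      (fun n hn => by
        have := Finset.mem_filter.1 hn
        rw [← this.2]; exact hfd n this.1)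
    calc ((T.filter fun n => f n = m).card : ℝ) ≤ (m.primeFactors.card : ℝ) ^ k := by
          exact_mod_cast h2
      _ ≤ _ := by
        gcongr
        exact card_primeFactors_le hm0 (by linarith)
  have hcard := Finset.card_le_mul_card_image_of_maps_to (fun n hn => hf n hn) _ hfib
  have hI : ((Finset.Icc ⌈x - w * B⌉₊ ⌊x + w * B⌋₊).card : ℝ) ≤ 2 * (w * B) + 1 := by
    rw [Nat.card_Icc]
    have h1 : x - w * B ≤ ⌈x - w * B⌉₊ := Nat.le_ceil _
    have h2 : (⌊x + w * B⌋₊ : ℝ) ≤ x + w * B := Nat.floor_le (by positivity)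
    rcases le_total ⌈x - w * B⌉₊ (⌊x + w * B⌋₊ + 1) with h | h
    · rw [Nat.cast_sub h]; push_cast; linarith
    · rw [Nat.sub_eq_zero_of_le h]; simp; positivity
  calc (T.card : ℝ) ≤ (⌊(2 * Z) ^ k⌋₊ : ℝ) * (Finset.Icc ⌈x - w * B⌉₊ ⌊x + w * B⌋₊).card := by
          exact_mod_cast hcard
      _ ≤ (2 * Z) ^ k * (2 * (w * B) + 1) := by
          gcongr
          exact Nat.floor_le (by positivity)
      _ = _ := by ring

/-- For `ξ ≥ N / 2` at least `N / 4` of the indices are not bad in the sense of `card_bad_le` with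
`x = ξ / π`, and each of them contributes a factor at most `exp (-2 * w ^ 2)`. -/
lemma prod_cos_far {k : ℕ} {V : Finset ℕ} {b : ℕ → ℕ} {B w ξ Z N : ℝ}
    (hb : ∀ n ∈ V, IsKPrime k (b n)) (hinj : Set.InjOn b V) (hB : ∀ n ∈ V, (b n : ℝ) ≤ B)
    (hB0 : 0 ≤ B) (hw : 0 ≤ w) (hwB : w * B ≤ N / 16) (hN : 0 < N) (hξN : N / 2 ≤ ξ)
    (hZ : 0 ≤ Z) (hξZ : ξ ≤ rexp Z) (hV : N / 2 ≤ V.card)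
    (hcount : (2 * (w * B) + 1) * (2 * Z) ^ k ≤ N / 4) (hwZ : 4 * Z ≤ N * w ^ 2) :
    |∏ n ∈ V, cos (ξ * (1 / (b n : ℝ)))| ≤ rexp (-(2 * Z)) := by
  classical
  have hpi3 := pi_gt_three
  have hpi4 := pi_le_four
  set x := ξ / π with hx
  have hxl : N / 8 ≤ x := by
    rw [hx, le_div_iff₀ pi_pos]; nlinarith
  have hxu : 2 * x ≤ ξ := by
    rw [hx, ← mul_div_assoc, div_le_iff₀ pi_pos]; nlinarith
  have hbad := card_bad_le hb hinj hB hB0 hw (x := x) (Z := Z) (by linarith) (by linarith)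
    hZ (by linarith)
  have hsplit := Finset.card_filter_add_card_filter_not (s := V)
    (fun n => |x / b n - round (x / b n)| < w)
  set G := V.filter fun n => ¬ |x / b n - round (x / b n)| < w
  have hG : N / 4 ≤ G.card := by
    have : ((V.filter fun n => |x / b n - round (x / b n)| < w).card : ℝ) + G.card = V.card := by
      exact_mod_cast hsplit
    linarith
  have hterm : ∀ n : ℕ, |cos (ξ * (1 / (b n : ℝ)))| ≤
      rexp (-2 * (x / b n - round (x / b n)) ^ 2) := by
    intro n
    have := abs_cos_le_exp (x / b n)
    rwa [show π * (x / b n) = ξ * (1 / (b n : ℝ)) by rw [hx]; field_simp] at this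
  rw [Finset.abs_prod]
  calc ∏ n ∈ V, |cos (ξ * (1 / (b n : ℝ)))| ≤ ∏ n ∈ G, |cos (ξ * (1 / (b n : ℝ)))| :=
        Finset.prod_le_prod_of_subset_of_le_one (Finset.filter_subset _ _)
          (fun _ _ => abs_nonneg _) fun _ _ _ => abs_cos_le_one _
    _ ≤ ∏ n ∈ G, rexp (-2 * w ^ 2) := by
        refine Finset.prod_le_prod (fun _ _ => abs_nonneg _) fun n hn => (hterm n).trans ?_
        have h1 := not_lt.1 (Finset.mem_filter.1 hn).2
        have h2 := pow_le_pow_left₀ hw h1 2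
        rw [sq_abs] at h2
        rw [Real.exp_le_exp]; linarith
    _ = rexp (G.card * (-2 * w ^ 2)) := by rw [Finset.prod_const, ← Real.exp_nat_mul]
    _ ≤ _ := by
        rw [Real.exp_le_exp]
        nlinarith [sq_nonneg w]

/-- For `|ξ| ≤ N / 2` every `ξ / (π * b n)` has absolute value at most `1 / 2`, so its nearest integer
may be taken to be `0` and every factor is small. -/
lemma prod_cos_near {V : Finset ℕ} {b : ℕ → ℕ} {B ξ Z N : ℝ}
    (hB : ∀ n ∈ V, (b n : ℝ) ≤ B) (hN : 0 < N) (hbN : ∀ n ∈ V, N / 2 ≤ b n)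
    (hξN : |ξ| ≤ N / 2) (hV : N / 2 ≤ V.card)
    (hZ : 20 * Z * B ^ 2 ≤ N * ξ ^ 2) (hZ0 : 0 ≤ Z) :
    |∏ n ∈ V, cos (ξ * (1 / (b n : ℝ)))| ≤ rexp (-(2 * Z)) := by
  have hpi3 := pi_gt_three
  have hpi2 : π ^ 2 ≤ 10 := by nlinarith [pi_lt_d2]
  have hterm : ∀ n ∈ V, |cos (ξ * (1 / (b n : ℝ)))| ≤ rexp (-2 * (2 * Z / N)) := by
    intro n hn
    have hb0 : 0 < (b n : ℝ) := by have := hbN n hn; linarith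
    have h := abs_cos_le_exp_of_abs_le (u := ξ / (π * b n)) (by
      rw [abs_div, abs_of_pos (by positivity : 0 < π * b n), div_le_iff₀ (by positivity)]
      have := hbN n hn
      nlinarith)
    rw [show π * (ξ / (π * b n)) = ξ * (1 / (b n : ℝ)) by field_simp] at h
    refine h.trans (Real.exp_le_exp.2 ?_)
    have h2 : 2 * Z / N ≤ (ξ / (π * b n)) ^ 2 := by
      rw [div_pow, div_le_div_iff₀ hN (by positivity), mul_pow]
      have h3 : (b n : ℝ) ^ 2 ≤ B ^ 2 := pow_le_pow_left₀ hb0.le (hB n hn) 2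
      have h4 : π ^ 2 * (b n : ℝ) ^ 2 ≤ 10 * B ^ 2 := by gcongr
      nlinarith
    linarith
  rw [Finset.abs_prod]
  calc ∏ n ∈ V, |cos (ξ * (1 / (b n : ℝ)))| ≤ ∏ n ∈ V, rexp (-2 * (2 * Z / N)) :=
        Finset.prod_le_prod (fun _ _ => abs_nonneg _) hterm
    _ = rexp (V.card * (-2 * (2 * Z / N))) := by rw [Finset.prod_const, ← Real.exp_nat_mul]
    _ ≤ _ := by
        rw [Real.exp_le_exp]
        have h0 : 0 ≤ 2 * Z / N := by positivity
        have : 2 * Z = N / 2 * (2 * (2 * Z / N)) := by field_simp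
        nlinarith

/-! ### Choice of parameters and conclusion -/

lemma succ_le_nth {k : ℕ} (hk : 1 ≤ k) (n : ℕ) : n + 1 ≤ Nat.nth (IsKPrime k) n := by
  have hinf := infinite_isKPrime hk
  induction n with
  | zero =>
    exact Nat.pos_of_ne_zero (Nat.nth_mem_of_infinite hinf 0).1.ne_zero
  | succ n ih =>
    have := Nat.nth_strictMono hinf (Nat.lt_add_one n)
    omega

/-- The decrements of `n ^ (-3/4)` are at most `n ^ (-3/4) * (n + 1) ^ (-3/4)`, while the terms of the
series are at least `(n + 1) ^ (-5/4)`. The index is shifted: `Nat.nth (IsKPrime k) n` is `b (n + 1)`. -/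
lemma eventually_rpow_sub_le {k : ℕ} (hk : 1 ≤ k) :
    ∀ᶠ n : ℕ in atTop, ((n : ℝ) ^ (3 / 4 : ℝ))⁻¹ - (((n + 1 : ℕ) : ℝ) ^ (3 / 4 : ℝ))⁻¹ ≤
      1 / (Nat.nth (IsKPrime k) n : ℝ) := by
  have h1 := (tendsto_add_atTop_nat 1).eventually
    (nth_le_rpow hk (δ := 1 / 4) (by norm_num))
  have h2 := (tendsto_add_atTop_nat 1).eventually
    (eventually_mul_rpow_le 2 (show (1 + 1 / 4 : ℝ) < 3 / 2 by norm_num))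
  filter_upwards [h1, h2, eventually_ge_atTop 1] with n h1 h2 hn
  simp only [Nat.add_sub_cancel] at h1
  have hn' : (1 : ℝ) ≤ n := by exact_mod_cast hn
  have hn1 : (0 : ℝ) < ((n + 1 : ℕ) : ℝ) := by positivity
  set u := (n : ℝ) ^ (3 / 4 : ℝ) with hu
  set v := ((n + 1 : ℕ) : ℝ) ^ (3 / 4 : ℝ) with hv
  have hu1 : 1 ≤ u := one_le_rpow hn' (by norm_num)
  have hv0 : 0 < v := by positivity
  have hvu : v ≤ u + 1 := by
    have := Real.rpow_add_le_add_rpow (a := (n : ℝ)) (b := 1) (by linarith) (by norm_num)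
      (show (0 : ℝ) ≤ 3 / 4 by norm_num) (by norm_num)
    rw [Real.one_rpow] at this
    rw [hv]; push_cast; exact this
  have hvv : ((n + 1 : ℕ) : ℝ) ^ (3 / 2 : ℝ) = v * v := by
    rw [hv, ← rpow_add hn1]; norm_num
  have hb0 : (0 : ℝ) < Nat.nth (IsKPrime k) n := by
    have := succ_le_nth hk n
    exact_mod_cast (by omega : 0 < Nat.nth (IsKPrime k) n)
  rw [hvv] at h2
  have h3 : (Nat.nth (IsKPrime k) n : ℝ) ≤ u * v := by nlinarith
  calc u⁻¹ - v⁻¹ = (v - u) / (u * v) := by field_simp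
    _ ≤ 1 / (u * v) := by gcongr; linarith
    _ ≤ _ := one_div_le_one_div_of_le hb0 h3

/-- With `A = exp (-2y) / N ^ 2` the lower bound of `core` exceeds `1 / 8`, whereas `|D| ≥ exp (-y)` would
give `D ^ 2 / A ≥ N ^ 2` and make the right-hand side at most `3 * N * exp (y - N ^ 2 / 4)`. -/
lemma final_numeric {y Z l N A D : ℝ} (hN : 4 ≤ N) (hl : N = rexp l)
    (hA : A = rexp (-2 * y) / N ^ 2) (hZ : 4 ≤ Z) (hyZ : 4 * y ≤ Z) (hlZ : 6 * l ≤ Z)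
    (hZN : 4 * Z ≤ N)
    (h : 1 / 4 - 2 * rexp Z * rexp (-(2 * Z)) -
      √(π / (A / 2)) * rexp (-(A * rexp Z ^ 2 / 2)) ≤ √(π / A) * rexp (-D ^ 2 / (4 * A))) :
    |D| < rexp (-y) := by
  by_contra hcon
  rw [not_lt] at hcon
  have hN0 : 0 < N := by linarith
  have hA0 : 0 < A := by rw [hA]; positivity
  have hE : rexp (-2 * y) * rexp y ^ 2 = 1 := by
    rw [← Real.exp_nat_mul, ← Real.exp_add]; simp
  have e4 : rexp (-4) ≤ 1 / 54 := by
    rw [Real.exp_neg, one_div]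
    apply inv_anti₀ (by norm_num)
    have : rexp 4 = rexp 1 ^ 4 := by rw [← Real.exp_nat_mul]; norm_num
    rw [this]
    have h1 := Real.exp_one_gt_d9
    calc (54 : ℝ) ≤ 2.718 ^ 4 := by norm_num
      _ ≤ rexp 1 ^ 4 := by gcongr; linarith
  have hπA : ∀ c : ℝ, 0 < c → π * c ≤ 9 → √(π * c / A) ≤ 3 * N * rexp y := by
    intro c hc h9
    apply Real.sqrt_le_iff.2 ⟨by positivity, ?_⟩
    rw [div_le_iff₀ hA0, hA]
    have : (3 * N * rexp y) ^ 2 * (rexp (-2 * y) / N ^ 2) = 9 * (rexp (-2 * y) * rexp y ^ 2) := by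
      field_simp; ring
    rw [this, hE]; linarith
  have hpi := pi_lt_d2
  have s1 : √(π / A) ≤ 3 * N * rexp y := by
    have := hπA 1 (by norm_num) (by linarith)
    rwa [mul_one] at this
  have s2 : √(π / (A / 2)) ≤ 3 * N * rexp y := by
    have := hπA 2 (by norm_num) (by linarith)
    rwa [show π / (A / 2) = π * 2 / A by field_simp]
  have t0 : 3 * N * rexp y * rexp (-N) ≤ 1 / 18 := by
    have : N * rexp y * rexp (-N) ≤ rexp (-4) := by
      nth_rewrite 1 [hl]
      rw [← Real.exp_add, ← Real.exp_add, Real.exp_le_exp]; linarith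
    linarith
  have t1 : 2 * rexp Z * rexp (-(2 * Z)) ≤ 1 / 27 := by
    have : rexp Z * rexp (-(2 * Z)) ≤ rexp (-4) := by
      rw [← Real.exp_add, Real.exp_le_exp]; linarith
    linarith
  have t2 : √(π / (A / 2)) * rexp (-(A * rexp Z ^ 2 / 2)) ≤ 1 / 18 := by
    refine le_trans ?_ t0
    refine mul_le_mul s2 (Real.exp_le_exp.2 ?_) (exp_pos _).le (by positivity)
    have : A * rexp Z ^ 2 = rexp (2 * Z - 2 * y - 2 * l) := by
      rw [hA, hl, ← Real.exp_nat_mul, ← Real.exp_nat_mul, ← Real.exp_sub, ← Real.exp_add]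
      congr 1; push_cast; ring
    rw [this]
    have h2 : rexp (l + 1) ≤ rexp (2 * Z - 2 * y - 2 * l) := Real.exp_le_exp.2 (by linarith)
    rw [Real.exp_add, ← hl] at h2
    nlinarith [Real.exp_one_gt_d9]
  have t3 : √(π / A) * rexp (-D ^ 2 / (4 * A)) ≤ 1 / 18 := by
    refine le_trans ?_ t0
    refine mul_le_mul s1 (Real.exp_le_exp.2 ?_) (exp_pos _).le (by positivity)
    have hD : rexp (-2 * y) ≤ D ^ 2 := by
      have := pow_le_pow_left₀ (exp_pos _).le hcon 2
      rw [sq_abs, ← Real.exp_nat_mul] at this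
      push_cast at this
      rwa [show (2 : ℝ) * -y = -2 * y by ring] at this
    rw [neg_div, neg_le_neg_iff, le_div_iff₀ (by positivity)]
    have hAN : A * N ^ 2 = rexp (-2 * y) := by rw [hA]; field_simp
    nlinarith
  linarith

/-- `greedy` applied to `1 / b n` with error bound `φ n = n ^ (-3/4)`. -/
lemma first_half {k : ℕ} (hk : 1 ≤ k) {b : ℕ → ℕ}
    (hbP : ∀ n, 1 ≤ n → b n = Nat.nth (IsKPrime k) (n - 1)) (hbge : ∀ n, 1 ≤ n → n ≤ b n) (τ : ℝ) :
    ∃ N₁ : ℕ, ∀ M : ℕ, N₁ ≤ M → ∃ s : ℕ → ℝ, (∀ n, s n = 1 ∨ s n = -1) ∧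
      |(∑ n ∈ Finset.Icc 1 M, s n * (1 / (b n : ℝ))) - τ| ≤ ((M : ℝ) ^ (3 / 4 : ℝ))⁻¹ := by
  obtain ⟨n₁, hn₁⟩ := eventually_atTop.1 (eventually_rpow_sub_le hk)
  refine greedy (a := fun n => 1 / (b n : ℝ)) (φ := fun n => ((n : ℝ) ^ (3 / 4 : ℝ))⁻¹)
    (n₁ := n₁ + 1) ?_ ?_ ?_ ?_ τ
  · intro n hn
    have : (0 : ℝ) < b n := by exact_mod_cast (by have := hbge n hn; omega : 0 < b n)
    positivity
  · rw [← summable_nat_add_iff 1]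
    intro h
    refine not_summable_nth hk (h.congr fun n => ?_)
    rw [hbP (n + 1) (by omega), Nat.add_sub_cancel]
  · intro n hn
    have h1 : (1 : ℝ) ≤ n := by exact_mod_cast (by omega : 1 ≤ n)
    have h2 : (n : ℝ) ≤ b n := by exact_mod_cast hbge n (by omega)
    have h3 : (n : ℝ) ^ (3 / 4 : ℝ) ≤ n := by
      conv_rhs => rw [← rpow_one (n : ℝ)]
      exact rpow_le_rpow_of_exponent_le h1 (by norm_num)
    rw [← one_div]
    exact one_div_le_one_div_of_le (by positivity) (by linarith)
  · intro n hn
    have := hn₁ n (by omega)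
    simp only [hbP (n + 1) (by omega), Nat.add_sub_cancel]
    exact this

set_option maxHeartbeats 1000000 in
/-- **Theorem 2 (products of `k` distinct primes).**
Fix `k ≥ 1` and let `b n` be the `n`-th element (in increasing order, `n ≥ 1`)
of the set of positive integers that are products of exactly `k` distinct primes.
Then for every `0 < ε < 1/(2k+1)` and every `τ ∈ ℝ`, for all sufficiently large `N`
there is a choice of signs with
`|∑_{n=1}^N s n / b n − τ| < exp (−N ^ (1/(2k+1) − ε))`. -/
theorem smallest_signed_sum_k_primes
    (k : ℕ) (hk : 1 ≤ k)
    (b : ℕ → ℕ)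
    (hb : ∀ n : ℕ, 1 ≤ n →
      b n = Nat.nth (fun m => Squarefree m ∧ m.primeFactors.card = k) (n - 1))
    (ε : ℝ) (hε0 : 0 < ε) (hε1 : ε < 1 / (2 * (k : ℝ) + 1)) (τ : ℝ) :
    ∃ N₀ : ℕ, ∀ N : ℕ, N₀ ≤ N →
      ∃ s : ℕ → ℝ, (∀ n, s n = 1 ∨ s n = -1) ∧
        |(∑ n ∈ Finset.Icc 1 N, s n / (b n : ℝ)) - τ| <
          Real.exp (-((N : ℝ) ^ (1 / (2 * (k : ℝ) + 1) - ε))) := by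
  have hinf := infinite_isKPrime hk
  have hbP : ∀ n, 1 ≤ n → b n = Nat.nth (IsKPrime k) (n - 1) := hb
  have hbk : ∀ n, 1 ≤ n → IsKPrime k (b n) := fun n hn => by
    rw [hbP n hn]; exact Nat.nth_mem_of_infinite hinf _
  have hbge : ∀ n, 1 ≤ n → n ≤ b n := fun n hn => by
    rw [hbP n hn]; have := succ_le_nth hk (n - 1); omega
  have hbmono : ∀ m n, 1 ≤ m → m ≤ n → b m ≤ b n := fun m n hm hmn => by
    rw [hbP m hm, hbP n (by omega)]; exact (Nat.nth_monotone hinf) (by omega)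
  have hbinj : ∀ m n, 1 ≤ m → 1 ≤ n → b m = b n → m = n := fun m n hm hn h => by
    rw [hbP m hm, hbP n hn] at h
    have := Nat.nth_injective hinf h
    omega
  obtain ⟨N₁, hN₁⟩ := first_half hk hbP hbge τ
  have hk0 : (1 : ℝ) ≤ k := by exact_mod_cast hk
  set θ : ℝ := 1 / (2 * (k : ℝ) + 1) - ε with hθ
  set θ' : ℝ := θ + ε / 2 with hθ'
  set δ : ℝ := ε / 16 with hδ
  have hθ0 : 0 < θ := by rw [hθ]; linarith
  have hkey : (2 * k + 1) * θ' = 1 - (2 * k + 1) * (ε / 2) := by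
    rw [hθ', hθ]; field_simp; ring
  have hε3 : 3 * ε < 1 := by
    rw [lt_div_iff₀ (by positivity)] at hε1
    nlinarith
  have hθ3 : 3 * θ' ≤ 1 := by nlinarith
  -- `w = N ^ (-κ)`: the number of bad indices is about `w B Z ^ k = N ^ (1 - δ)` up to constants, and
  -- the decay exponent `N w ^ 2 = N ^ (1 - 2κ)` beats `Z = N ^ θ'` because `(2k + 1) θ' + 4 δ < 1`.
  set κ : ℝ := k * θ' + 2 * δ with hκ
  have hκ1 : θ' < 1 - 2 * κ := by rw [hκ, hδ]; nlinarith
  have hκ2 : 0 < 1 - δ - k * θ' := by nlinarith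
  -- All conditions on the size of `N`, in the order in which they are numbered `c1` to `c12` below.
  have E := (nth_le_rpow hk (δ := δ) (by positivity)).and <|
    (eventually_mul_rpow_le (12 * 2 ^ k) (show 1 - δ < 1 by linarith)).and <|
    (eventually_mul_rpow_le 16 (show 1 - δ - k * θ' < 1 by nlinarith)).and <|
    (eventually_mul_rpow_le 4 hκ1).and <|
    (eventually_mul_rpow_le 20 (show θ' + (2 + 2 * δ) < 1 + 2 * (7 / 10) by linarith)).and <|
    (eventually_mul_rpow_le 2 (show (7 / 10 : ℝ) < 1 by norm_num)).and <|
    (eventually_mul_rpow_le 3 (show (7 / 10 : ℝ) < 3 / 4 by norm_num)).and <|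
    (eventually_mul_rpow_le 4 (show 0 < θ' by linarith)).and <|
    (eventually_mul_rpow_le 4 (show θ < θ' by linarith)).and <|
    (eventually_mul_rpow_le 4 (show θ' < 1 by linarith)).and <|
    (eventually_log_le 6 (show 0 < θ' by linarith)).and
    (eventually_ge_atTop (2 * N₁ + 4))
  obtain ⟨N₀, hN₀⟩ := eventually_atTop.1 E
  refine ⟨N₀, fun N hN => ?_⟩
  obtain ⟨c1, c2, c3, c4, c5, c6, c7, c8, c9, c10, c11, c12⟩ := hN₀ N hN
  rw [rpow_one] at c2 c3 c6 c10
  rw [rpow_zero, mul_one] at c8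
  have hN4 : (4 : ℝ) ≤ N := by exact_mod_cast (by omega : 4 ≤ N)
  have hN0 : (0 : ℝ) < N := by linarith
  set M := N / 2 with hM
  obtain ⟨s₁, hs₁, hτ⟩ := hN₁ M (by omega)
  -- `t` is what the signed sum over `Ioc M N` has to match.
  set t := τ - ∑ n ∈ Finset.Icc 1 M, s₁ n * (1 / (b n : ℝ)) with ht
  set y : ℝ := (N : ℝ) ^ θ with hy
  set Z : ℝ := (N : ℝ) ^ θ' with hZ
  set B : ℝ := (N : ℝ) ^ (1 + δ) with hB
  set w : ℝ := (N : ℝ) ^ (-κ) with hw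
  set R : ℝ := (N : ℝ) ^ (7 / 10 : ℝ) with hR
  have hwB : w * B = (N : ℝ) ^ (1 - δ - k * θ') := by
    rw [hw, hB, ← rpow_add hN0]; congr 1; rw [hκ]; ring
  have hVprop : ∀ n ∈ Finset.Ioc M N, 1 ≤ n ∧ n ≤ N ∧ (N : ℝ) / 2 ≤ b n := by
    intro n hn
    rw [Finset.mem_Ioc] at hn
    refine ⟨by omega, hn.2, ?_⟩
    have h1 : (n : ℝ) ≤ b n := by exact_mod_cast hbge n (by omega)
    have h2 : (N : ℝ) ≤ 2 * n := by exact_mod_cast (by omega : N ≤ 2 * n)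
    linarith
  have hVB : ∀ n ∈ Finset.Ioc M N, (b n : ℝ) ≤ B := by
    intro n hn
    obtain ⟨h1, h2, -⟩ := hVprop n hn
    have : (b n : ℝ) ≤ b N := by exact_mod_cast hbmono n N h1 h2
    rw [hbP N (by omega)] at this
    exact this.trans c1
  have hVcard : (N : ℝ) / 2 ≤ (Finset.Ioc M N).card := by
    rw [Nat.card_Ioc, Nat.cast_sub (by omega)]
    have : (2 : ℝ) * M ≤ N := by exact_mod_cast (by omega : 2 * M ≤ N)
    linarith
  have hVcard' : ((Finset.Ioc M N).card : ℝ) ≤ N := by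
    rw [Nat.card_Ioc]; exact_mod_cast Nat.sub_le _ _
  have ha : ∀ n ∈ Finset.Ioc M N, 1 / (b n : ℝ) ≤ 2 / N := by
    intro n hn
    have h := (hVprop n hn).2.2
    rw [div_le_div_iff₀ (by linarith) hN0]; linarith
  have hB0 : 0 ≤ B := by positivity
  have hZ0 : 0 ≤ Z := by positivity
  have hR0 : 0 < R := by positivity
  have hw0 : 0 ≤ w := by positivity
  have hR1 : 1 ≤ R := one_le_rpow (by linarith) (by norm_num)
  have hRt : R * |t| ≤ 1 := by
    have h1 : |t| ≤ ((M : ℝ) ^ (3 / 4 : ℝ))⁻¹ := by rw [ht, abs_sub_comm]; exact hτ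
    have hM0 : (0 : ℝ) < M := by exact_mod_cast (by omega : 0 < M)
    -- `M = ⌊N / 2⌋` and `N ≥ 4`
    have h2 : (N : ℝ) ≤ 3 * M := by exact_mod_cast (by omega : N ≤ 3 * M)
    have h3 : (N : ℝ) ^ (3 / 4 : ℝ) ≤ 3 * (M : ℝ) ^ (3 / 4 : ℝ) := by
      calc (N : ℝ) ^ (3 / 4 : ℝ) ≤ (3 * M : ℝ) ^ (3 / 4 : ℝ) := by gcongr
        _ = (3 : ℝ) ^ (3 / 4 : ℝ) * (M : ℝ) ^ (3 / 4 : ℝ) := mul_rpow (by norm_num) hM0.le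
        _ ≤ _ := by
          gcongr
          conv_rhs => rw [← rpow_one (3 : ℝ)]
          exact rpow_le_rpow_of_exponent_le (by norm_num) (by norm_num)
    have h4 : R ≤ (M : ℝ) ^ (3 / 4 : ℝ) := by linarith
    calc R * |t| ≤ (M : ℝ) ^ (3 / 4 : ℝ) * ((M : ℝ) ^ (3 / 4 : ℝ))⁻¹ := by gcongr
      _ = 1 := mul_inv_cancel₀ (by positivity)
  have hmid : ∀ ξ : ℝ, R < |ξ| → |ξ| ≤ rexp Z →
      |∏ n ∈ Finset.Ioc M N, cos (ξ * (1 / (b n : ℝ)))| ≤ rexp (-(2 * Z)) := by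
    intro ξ h1 h2
    rcases le_total |ξ| (N / 2) with h3 | h3
    · refine prod_cos_near hVB hN0 (fun n hn => (hVprop n hn).2.2) h3 hVcard ?_ hZ0
      have h4 : R ^ 2 ≤ ξ ^ 2 := by
        rw [← sq_abs ξ]; exact pow_le_pow_left₀ hR0.le h1.le 2
      have h5 : 20 * Z * B ^ 2 = 20 * (N : ℝ) ^ (θ' + (2 + 2 * δ)) := by
        rw [hZ, hB, ← rpow_natCast, ← rpow_mul hN0.le, mul_assoc, ← rpow_add hN0]
        congr 2; push_cast; ring
      have h6 : (N : ℝ) * R ^ 2 = (N : ℝ) ^ (1 + 2 * (7 / 10) : ℝ) := by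
        rw [hR, ← rpow_natCast, ← rpow_mul hN0.le, rpow_add hN0, rpow_one]
        congr 2; push_cast; ring
      rw [h5]
      refine c5.trans ?_
      rw [← h6]
      gcongr
    · have heven : ∏ n ∈ Finset.Ioc M N, cos (ξ * (1 / (b n : ℝ))) =
          ∏ n ∈ Finset.Ioc M N, cos (|ξ| * (1 / (b n : ℝ))) := by
        refine Finset.prod_congr rfl fun n _ => ?_
        rw [← cos_abs, abs_mul, abs_of_nonneg (by positivity : (0 : ℝ) ≤ 1 / b n)]
      rw [heven]
      refine prod_cos_far (fun n hn => hbk n (hVprop n hn).1)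
        (fun m hm n hn h => hbinj m n (hVprop m hm).1 (hVprop n hn).1 h) hVB hB0 hw0 ?_ hN0 h3
        hZ0 h2 hVcard ?_ ?_
      · rw [hwB]; linarith
      · have h4 : 1 ≤ w * B := by rw [hwB]; exact one_le_rpow (by linarith) hκ2.le
        calc (2 * (w * B) + 1) * (2 * Z) ^ k ≤ 3 * (w * B) * (2 * Z) ^ k := by
              gcongr; linarith
          _ = 3 * 2 ^ k * (N : ℝ) ^ (1 - δ) := by
              rw [hwB, mul_pow, hZ, ← rpow_natCast ((N : ℝ) ^ θ'), ← rpow_mul hN0.le,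
                show 1 - δ = (1 - δ - k * θ') + θ' * k by ring, rpow_add hN0]
              ring_nf
          _ ≤ N / 4 := by linarith
      · have h4 : N * w ^ 2 = (N : ℝ) ^ (1 - 2 * κ) := by
          rw [hw, ← rpow_natCast, ← rpow_mul hN0.le, sub_eq_add_neg, rpow_add hN0, rpow_one]
          congr 2; push_cast; ring
        rw [h4]; exact c4
  have hA1 : rexp (-2 * y) / (N : ℝ) ^ 2 ≤ 1 / 2 := by
    rw [div_le_iff₀ (by positivity)]
    have : rexp (-2 * y) ≤ 1 := Real.exp_le_one_iff.2 (by
      have : 0 < y := by positivity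
      linarith)
    nlinarith
  have haR : ∀ n ∈ Finset.Ioc M N, R * (1 / (b n : ℝ)) ≤ 1 := fun n hn => by
    calc R * (1 / (b n : ℝ)) ≤ R * (2 / N) :=
          mul_le_mul_of_nonneg_left (ha n hn) hR0.le
      _ ≤ 1 := by rw [← mul_div_assoc, div_le_one hN0]; linarith
  have hsq : ∑ n ∈ Finset.Ioc M N, (1 / (b n : ℝ)) ^ 2 ≤ 1 := by
    calc ∑ n ∈ Finset.Ioc M N, (1 / (b n : ℝ)) ^ 2 ≤ ∑ n ∈ Finset.Ioc M N, (2 / (N : ℝ)) ^ 2 :=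
          Finset.sum_le_sum fun n hn => pow_le_pow_left₀ (by positivity) (ha n hn) 2
      _ = (Finset.Ioc M N).card * (2 / (N : ℝ)) ^ 2 := by rw [Finset.sum_const, nsmul_eq_mul]
      _ ≤ N * (2 / (N : ℝ)) ^ 2 := by gcongr
      _ = 4 / N := by field_simp; norm_num
      _ ≤ 1 := by rw [div_le_one hN0]; exact hN4
  have hA0 : 0 < rexp (-2 * y) / (N : ℝ) ^ 2 := by positivity
  obtain ⟨s₂, hs₂, hcore⟩ := core (A := rexp (-2 * y) / (N : ℝ) ^ 2) (R := R) (X := rexp Z)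
    (Z := rexp (-(2 * Z))) (t := t) (V := Finset.Ioc M N) (a := fun n => 1 / (b n : ℝ))
    hA0 hA1 hR1 (exp_pos _).le (exp_pos _).le (fun n _ => by positivity) haR hRt hsq
    hmid
  have hfin := final_numeric hN4 (Real.exp_log hN0).symm rfl c8 c9 c11 c10 hcore
  refine ⟨fun n => if n ≤ M then s₁ n else s₂ n, fun n => ?_, ?_⟩
  · by_cases h : n ≤ M
    · simpa [h] using hs₁ n
    · simpa [h] using hs₂ n
  · have hsum : ∑ n ∈ Finset.Icc 1 N, (if n ≤ M then s₁ n else s₂ n) / (b n : ℝ) =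
        ∑ n ∈ Finset.Icc 1 M, s₁ n * (1 / (b n : ℝ)) +
          ∑ n ∈ Finset.Ioc M N, s₂ n * (1 / (b n : ℝ)) := by
      have hu : Finset.Icc 1 N = Finset.Icc 1 M ∪ Finset.Ioc M N := by
        ext n; simp only [Finset.mem_Icc, Finset.mem_union, Finset.mem_Ioc]; omega
      have hd : Disjoint (Finset.Icc 1 M) (Finset.Ioc M N) := by
        rw [Finset.disjoint_left]
        intro n h1 h2
        rw [Finset.mem_Icc] at h1
        rw [Finset.mem_Ioc] at h2
        omega
      rw [hu, Finset.sum_union hd]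
      congr 1
      · refine Finset.sum_congr rfl fun n hn => ?_
        rw [if_pos (Finset.mem_Icc.1 hn).2]; ring
      · refine Finset.sum_congr rfl fun n hn => ?_
        rw [if_neg (by have := (Finset.mem_Ioc.1 hn).1; omega)]; ring
    rw [hsum]
    rw [ht] at hfin
    convert hfin using 2
    ring
end

section
/- Let (a_n)_{n≥1} be a strictly decreasing sequence of positive real numbers with a_n → 0 and Σ_{n≥1} a_n = +∞. Then for any real numbers λ ≤ Λ there exists a choice of signs (s_n)_{n≥1} with s_n ∈ {−1,1} such that liminf_{N→∞} Σ_{n≤N} s_n a_n = λ and limsup_{N→∞} Σ_{n≤N} s_n a_n = Λ. -/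
/-!
Greedy choice with hysteresis: take the sign `-1` whenever the current partial sum `S n` is above
`Lam`, the sign `+1` whenever it is below `lam`, and otherwise repeat the previous sign.

Divergence of `∑ a` forces `S` to leave `[lam, Lam]` through each end infinitely often
(`SignRule.exists_gt`). Once `S` is at most `Lam + ε` and all later terms are at most `ε`, it
stays at most `Lam + ε`, since a step starting above `Lam` goes down (`SignRule.eventually_le`).
The rule is invariant under negating `S` and the signs and replacing `[lam, Lam]` by
`[-Lam, -lam]` (`SignRule.neg`), so the lower end needs no separate argument.
-/

open Filter Real

/-- The partial sums `S` arise from the signs `s` by the hysteresis rule on `[lam, Lam]`. -/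
structure SignRule (a s S : ℕ → ℝ) (lam Lam : ℝ) : Prop where
  sign : ∀ n, s n = 1 ∨ s n = -1
  step : ∀ n, S (n + 1) = S n + s (n + 1) * a (n + 1)
  above : ∀ n, Lam < S n → s (n + 1) = -1
  below : ∀ n, S n < lam → s (n + 1) = 1
  keep : ∀ n, lam ≤ S n → S n ≤ Lam → s (n + 1) = s n

namespace SignRule

variable {a s S : ℕ → ℝ} {lam Lam : ℝ}

lemma neg (h : SignRule a s S lam Lam) :
    SignRule a (fun n => -s n) (fun n => -S n) (-Lam) (-lam) where
  sign n := by rcases h.sign n with e | e <;> simp [e]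
  step n := by rw [h.step n]; ring
  above n hn := by rw [h.below n (by linarith)]
  below n hn := by rw [h.above n (by linarith), neg_neg]
  keep n h1 h2 := by rw [h.keep n (by linarith) (by linarith)]

lemma eq_of_const (h : SignRule a s S lam Lam) {m : ℕ} {c : ℝ} (hc : ∀ n, m ≤ n → s n = c)
    {n : ℕ} (hn : m ≤ n) :
    S n = S m + c * (∑ k ∈ Finset.Icc 1 n, a k - ∑ k ∈ Finset.Icc 1 m, a k) := by
  induction n, hn using Nat.le_induction with
  | base => simp
  | succ n hn ih =>
    rw [h.step, ih, hc (n + 1) (by omega), Finset.sum_Icc_succ_top (by omega)]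
    ring

/-- If `S` stayed at most `Lam`, the signs would eventually be constant: a sign `+1` would never be
switched back. Either constant sign drives `S` out of `[lam, Lam]`, giving a contradiction. -/
lemma exists_gt (h : SignRule a s S lam Lam)
    (ha_div : Tendsto (fun N : ℕ => ∑ n ∈ Finset.Icc 1 N, a n) atTop atTop) (N : ℕ) :
    ∃ n, N ≤ n ∧ Lam < S n := by
  by_contra! hle
  by_cases hup : ∃ m, N ≤ m ∧ s m = 1
  · obtain ⟨m, hNm, hm⟩ := hup
    have hc : ∀ n, m ≤ n → s n = 1 := by
      intro n hn
      induction n, hn using Nat.le_induction with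
      | base => exact hm
      | succ n hn ih =>
        rcases lt_or_ge (S n) lam with hl | hl
        · exact h.below n hl
        · rw [h.keep n hl (hle n (by omega)), ih]
    obtain ⟨n, hn, hmn⟩ := ((ha_div.eventually_gt_atTop
      (Lam - S m + ∑ k ∈ Finset.Icc 1 m, a k)).and (eventually_ge_atTop m)).exists
    have e := h.eq_of_const hc hmn
    have := hle n (by omega)
    linarith
  · push Not at hup
    have hc : ∀ n, N ≤ n → s n = -1 := fun n hn => (h.sign n).resolve_left (hup n hn)
    obtain ⟨n, hn, hNn⟩ := ((ha_div.eventually_gt_atTop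
      (S N - lam + ∑ k ∈ Finset.Icc 1 N, a k)).and (eventually_ge_atTop N)).exists
    have e := h.eq_of_const hc hNn
    exact hup (n + 1) (by omega) (h.below n (by linarith))

lemma eventually_le (h : SignRule a s S lam Lam) (hll : lam ≤ Lam)
    (ha_pos : ∀ n : ℕ, 1 ≤ n → 0 < a n) (ha_lim : Tendsto a atTop (nhds 0))
    (ha_div : Tendsto (fun N : ℕ => ∑ n ∈ Finset.Icc 1 N, a n) atTop atTop)
    {ε : ℝ} (hε : 0 < ε) : ∀ᶠ n in atTop, S n ≤ Lam + ε := by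
  obtain ⟨N, hN⟩ := eventually_atTop.1 (ha_lim.eventually_lt_const hε)
  obtain ⟨m, hNm, hm⟩ := h.neg.exists_gt ha_div N
  refine eventually_atTop.2 ⟨m, fun n hn => ?_⟩
  induction n, hn using Nat.le_induction with
  | base => linarith
  | succ n hn ih =>
    have hp := ha_pos (n + 1) (by omega)
    have hs := hN (n + 1) (by omega)
    rw [h.step]
    rcases lt_or_ge Lam (S n) with hl | hl
    · rw [h.above n hl]; linarith
    · rcases h.sign (n + 1) with e | e <;> rw [e] <;> linarith

end SignRule

lemma exists_signRule (a : ℕ → ℝ) {lam Lam : ℝ} (hll : lam ≤ Lam) :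
    ∃ s : ℕ → ℝ, SignRule a s (fun N => ∑ n ∈ Finset.Icc 1 N, s n * a n) lam Lam := by
  classical
  let next : ℝ × ℝ → ℝ := fun p => if Lam < p.2 then -1 else if p.2 < lam then 1 else p.1
  -- the state is the pair (last sign, current partial sum)
  let st : ℕ → ℝ × ℝ := fun n => Nat.rec (1, 0)
    (fun n p => (next p, p.2 + next p * a (n + 1))) n
  have hsum : ∀ N, ∑ n ∈ Finset.Icc 1 N, (st n).1 * a n = (st N).2 := by
    intro N
    induction N with
    | zero => simp [st]
    | succ N ih => rw [Finset.sum_Icc_succ_top (by omega), ih]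
  have hnext : ∀ n, (st (n + 1)).1 =
      if Lam < (st n).2 then -1 else if (st n).2 < lam then 1 else (st n).1 := fun n => rfl
  refine ⟨fun n => (st n).1, ?_, ?_, ?_, ?_, ?_⟩
  · intro n
    induction n with
    | zero => exact Or.inl rfl
    | succ n ih =>
      simp only [hnext]
      split_ifs <;> simp_all
  · intro n
    exact Finset.sum_Icc_succ_top (by omega) _
  · intro n hn
    simp only [hsum] at hn
    simp [hnext, hn]
  · intro n hn
    simp only [hsum] at hn
    simp [hnext, hn, (hn.trans_le hll).le.not_gt]
  · intro n h1 h2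
    simp only [hsum] at h1 h2
    simp [hnext, h1.not_gt, h2.not_gt]



/-- **Riemann-type rearrangement for signed sums.**
Let `(a n)_{n ≥ 1}` be a strictly decreasing sequence of positive reals with
`a n → 0` and `∑ a n = +∞`. Then for any reals `λ ≤ Λ` there is a choice of signs
`s n ∈ {−1,1}` such that the partial sums `∑_{n ≤ N} s n * a n` have
liminf `λ` and limsup `Λ`. -/
theorem signed_sums_liminf_limsup
    (a : ℕ → ℝ) (ha_pos : ∀ n : ℕ, 1 ≤ n → 0 < a n)
    (ha_anti : ∀ m n : ℕ, 1 ≤ m → m < n → a n < a m)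
    (ha_lim : Tendsto a atTop (nhds 0))
    (ha_div : Tendsto (fun N : ℕ => ∑ n ∈ Finset.Icc 1 N, a n) atTop atTop)
    (lam Lam : ℝ) (hll : lam ≤ Lam) :
    ∃ s : ℕ → ℝ, (∀ n, s n = 1 ∨ s n = -1) ∧
      Filter.liminf (fun N : ℕ => ∑ n ∈ Finset.Icc 1 N, s n * a n) atTop = lam ∧
      Filter.limsup (fun N : ℕ => ∑ n ∈ Finset.Icc 1 N, s n * a n) atTop = Lam := by
  obtain ⟨s, h⟩ := exists_signRule a hll
  refine ⟨s, h.sign, ?_⟩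
  have hll' : -Lam ≤ -lam := neg_le_neg hll
  have hup : ∀ ε : ℝ, 0 < ε → _ := fun ε hε => h.eventually_le hll ha_pos ha_lim ha_div hε
  have hdn : ∀ ε : ℝ, 0 < ε → _ := fun ε hε => h.neg.eventually_le hll' ha_pos ha_lim ha_div hε
  have hfu := h.exists_gt ha_div
  have hfd := h.neg.exists_gt ha_div
  set S : ℕ → ℝ := fun N => ∑ n ∈ Finset.Icc 1 N, s n * a n
  have hdn' : ∀ ε : ℝ, 0 < ε → ∀ᶠ n in atTop, lam - ε ≤ S n := fun ε hε =>
    (hdn ε hε).mono fun n hn => by linarith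
  have bu : IsBoundedUnder (· ≤ ·) atTop S := isBoundedUnder_of_eventually_le (hup 1 one_pos)
  have bd : IsBoundedUnder (· ≥ ·) atTop S := isBoundedUnder_of_eventually_ge (hdn' 1 one_pos)
  constructor
  · apply le_antisymm
    · refine liminf_le_of_frequently_le (frequently_atTop.2 fun N => ?_) bd
      obtain ⟨n, hn, hS⟩ := hfd N
      exact ⟨n, hn, by linarith⟩
    · refine le_of_forall_sub_le fun ε hε => ?_
      exact le_liminf_of_le bu.isCoboundedUnder_ge (hdn' ε hε)
  · apply le_antisymm
    · refine le_of_forall_pos_le_add fun ε hε => ?_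
      exact limsup_le_of_le bd.isCoboundedUnder_le (hup ε hε)
    · refine le_limsup_of_frequently_le (frequently_atTop.2 fun N => ?_) bu
      obtain ⟨n, hn, hS⟩ := hfu N
      exact ⟨n, hn, hS.le⟩
end

section
/- Let β : ℕ → ℝ be a decreasing function with β(n) → 0 and β(n) ≤ 1/(8 log log n) for all sufficiently large n, and let (b_n)_{n≥1} be a strictly increasing sequence of positive integers with n ≤ b_n ≤ n^{1+β(n)} for all n. Then for every fixed A > 0 there exists a constant C' > 0 such that for all sufficiently large positive integers N and all real x ∈ [N, exp(C' (log N)²)] one has |ϱ_N(x)| < x^{−A}, where ϱ_N(x) = ∏_{n=1}^N cos(π x / b_n). -/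
open Filter Real

/-!
Write `L = log N` and `w = L / log L`, and let `‖t‖` be the distance from `t` to the nearest integer.
Since `|cos (π t)| ≤ exp (-2 ‖t‖²)`, it suffices that `‖x / b n‖ ≥ δ` for at least half of the
`n ≤ N`, with `N δ²` larger than `A log x`.

If `‖x / b n‖ < δ = H / M`, where `M = exp (L + w / 8)` bounds every `b n` with `n ≤ N`, then `b n`
divides an integer at distance less than `H` from `x`. There are at most `3 H` such integers, so
everything rests on a bound `D` for the number of divisors `d ≤ M` of an integer
`m ≤ exp (2 C' L²)`: at most `3 H D` of the `n` are bad (`card_near_le`).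

Rankin's trick (`card_divisors_le`) with exponent `σ = 1/2 - 1/log L` bounds this number by
`M ^ σ * exp (7 ∑_{p ∣ m} p ^ (-σ))`. The factor `M ^ σ` is about `exp (L / 2 - w)`, up to
`exp (w / 16)`, and when `C'` is a small constant the prime sum contributes at most
`exp (7 w / 16)` (`sum_primeFactors_rpow_le`); this last point uses Chebyshev's bound
`θ(t) ≤ t log 4` for primes up to a small multiple of `L²`, and `∑_{p ∣ m} log p ≤ log m` for larger
primes. So `D = exp ((L - w) / 2)` is admissible.

Taking `H = exp ((L + w) / 2) / 6` makes `3 H D = N / 2`, and then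
`N δ² = exp (3 w / 4) / 36`, which exceeds every fixed multiple of `L²`. The range
`log x ≍ (log N)²` is critical: the powers of `N` cancel exactly, and it is the saving
`exp (-w / 2)` in `D`, won by shifting `σ` below `1/2`, that outweighs the loss `exp (w / 8)` in `M`.
The value `C' = 10⁻⁷` works for all `A`.
-/

/-! ### Divisors up to a bound -/

lemma inv_one_sub_le_exp {t : ℝ} (ht0 : 0 ≤ t) (ht : t ≤ 6 / 7) : (1 - t)⁻¹ ≤ Real.exp (7 * t) := by
  have h1 : 0 < 1 - t := by linarith
  have h2 := Real.add_one_le_exp (7 * t)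
  refine le_trans ?_ h2
  rw [inv_le_iff_one_le_mul₀ h1]
  nlinarith

lemma prime_rpow_neg_le {σ : ℝ} (hσ : 1 / 4 ≤ σ) {p : ℕ} (hp : p.Prime) :
    (p : ℝ) ^ (-σ) ≤ 6 / 7 := by
  have hp2 : (2 : ℝ) ≤ p := by exact_mod_cast hp.two_le
  have h1 : (p : ℝ) ^ (-σ) ≤ (2 : ℝ) ^ (-(1 / 4) : ℝ) :=
    calc (p : ℝ) ^ (-σ) ≤ (p : ℝ) ^ (-(1 / 4) : ℝ) :=
          Real.rpow_le_rpow_of_exponent_le (by linarith) (by linarith)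
      _ ≤ (2 : ℝ) ^ (-(1 / 4) : ℝ) :=
          Real.rpow_le_rpow_of_nonpos (by norm_num) hp2 (by norm_num)
  refine h1.trans ?_
  have h2 : (0 : ℝ) ≤ (2 : ℝ) ^ (-(1 / 4) : ℝ) := by positivity
  refine le_of_pow_le_pow_left₀ (n := 4) (by norm_num) (by norm_num) ?_
  rw [← Real.rpow_natCast, ← Real.rpow_mul (by norm_num)]
  norm_num


/-- The divisor sum is multiplicative, and its local factor at `p` is at most
`1 / (1 - p ^ (-σ)) ≤ exp (7 p ^ (-σ))`; the condition `σ ≥ 1/4` keeps `p ^ (-σ)` away from `1`. -/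
lemma sum_divisors_rpow_le {σ : ℝ} (hσ : 1 / 4 ≤ σ) (m : ℕ) (hm : 0 < m) :
    ∑ d ∈ m.divisors, (d : ℝ) ^ (-σ) ≤
      Real.exp (7 * ∑ p ∈ m.primeFactors, (p : ℝ) ^ (-σ)) := by
  induction m using Nat.recOnPosPrimePosCoprime with
  | zero => omega
  | one => simp
  | prime_pow p n hp hn =>
    rw [Nat.primeFactors_prime_pow hn.ne' hp, Finset.sum_singleton,
      Nat.sum_divisors_prime_pow hp]
    have ht0 : (0 : ℝ) ≤ (p : ℝ) ^ (-σ) := by positivity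
    have ht := prime_rpow_neg_le hσ hp
    refine le_trans ?_ (inv_one_sub_le_exp ht0 ht)
    have : ∀ k ∈ Finset.range (n + 1), (((p ^ k : ℕ) : ℝ)) ^ (-σ) = ((p : ℝ) ^ (-σ)) ^ k := by
      intro k _
      push_cast
      rw [← Real.rpow_natCast, ← Real.rpow_natCast, ← Real.rpow_mul (by positivity),
        ← Real.rpow_mul (by positivity), mul_comm]
    rw [Finset.sum_congr rfl this, ← tsum_geometric_of_lt_one ht0 (by linarith)]
    exact (summable_geometric_of_lt_one ht0 (by linarith)).sum_le_tsum _ (fun _ _ => by positivity)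
  | coprime a b ha hb hab iha ihb =>
    rw [hab.primeFactors_mul, Finset.sum_union hab.disjoint_primeFactors, mul_add, Real.exp_add]
    have h1 : ∑ d ∈ (a * b).divisors, (d : ℝ) ^ (-σ) =
        (∑ d ∈ a.divisors, (d : ℝ) ^ (-σ)) * ∑ d ∈ b.divisors, (d : ℝ) ^ (-σ) := by
      rw [Finset.sum_mul_sum, ← Finset.sum_product', Nat.divisors_mul, Finset.mul_def,
        Finset.sum_image (by simpa using hab.mul_injOn_divisors)]
      refine Finset.sum_congr rfl fun x _ => ?_
      push_cast
      exact Real.mul_rpow (by positivity) (by positivity)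
    rw [h1]
    exact mul_le_mul (iha (by omega)) (ihb (by omega))
      (Finset.sum_nonneg fun _ _ => by positivity) (Real.exp_pos _).le

/-- Rankin's trick: each `d ≤ M` is counted with weight `(M / d) ^ σ ≥ 1`. -/
lemma card_divisors_le_s9 {σ : ℝ} (hσ : 1 / 4 ≤ σ) (m : ℕ) (hm : 0 < m) {M : ℝ} (hM : 0 < M) :
    (((m.divisors.filter fun d : ℕ => (d : ℝ) ≤ M).card : ℕ) : ℝ) ≤
      M ^ σ * Real.exp (7 * ∑ p ∈ m.primeFactors, (p : ℝ) ^ (-σ)) := by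
  have hσ0 : 0 ≤ σ := by linarith
  calc (((m.divisors.filter fun d : ℕ => (d : ℝ) ≤ M).card : ℕ) : ℝ)
      = ∑ d ∈ m.divisors.filter fun d : ℕ => (d : ℝ) ≤ M, (1 : ℝ) := by simp
    _ ≤ ∑ d ∈ m.divisors.filter fun d : ℕ => (d : ℝ) ≤ M, M ^ σ * (d : ℝ) ^ (-σ) := by
        refine Finset.sum_le_sum fun d hd => ?_
        rw [Finset.mem_filter] at hd
        have hd0 : (0 : ℝ) < d := by exact_mod_cast Nat.pos_of_mem_divisors hd.1
        rw [Real.rpow_neg hd0.le, ← div_eq_mul_inv, one_le_div (by positivity)]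
        exact Real.rpow_le_rpow hd0.le hd.2 hσ0
    _ ≤ ∑ d ∈ m.divisors, M ^ σ * (d : ℝ) ^ (-σ) :=
        Finset.sum_le_sum_of_subset_of_nonneg (Finset.filter_subset _ _)
          fun _ _ _ => by positivity
    _ = M ^ σ * ∑ d ∈ m.divisors, (d : ℝ) ^ (-σ) := by rw [Finset.mul_sum]
    _ ≤ _ := by gcongr; exact sum_divisors_rpow_le hσ m hm

/-! ### The sum over the prime factors -/

/-- Partial summation from Chebyshev's bound `θ(k) ≤ k log 4`. -/
lemma sum_log_div_sqrt_le (n : ℕ) :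
    ∑ p ∈ (Finset.Icc 1 n).filter Nat.Prime, Real.log p / √p ≤ 2 * Real.log 4 * √n := by
  have hlog4 : 0 ≤ Real.log 4 := Real.log_nonneg (by norm_num)
  have hθ : ∀ k : ℕ, ∑ p ∈ (Finset.Icc 1 k).filter Nat.Prime, Real.log p ≤ Real.log 4 * k := by
    intro k
    have h := Chebyshev.theta_le_log4_mul_x (x := (k : ℝ)) (by positivity)
    have hI : Finset.Icc 1 k = Finset.Ioc 0 k := by ext; simp; omega
    rw [hI]
    simpa [Chebyshev.theta] using h
  have key : ∑ p ∈ (Finset.Icc 1 n).filter Nat.Prime, Real.log p / √p ≤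
      (∑ p ∈ (Finset.Icc 1 n).filter Nat.Prime, Real.log p) / √n + Real.log 4 * √n := by
    induction n with
    | zero => simp
    | succ n ih =>
      simp only [Finset.sum_filter] at ih hθ ⊢
      rw [Finset.sum_Icc_succ_top (by omega), Finset.sum_Icc_succ_top (by omega), add_div]
      have h3 : (if Nat.Prime (n + 1) then Real.log ((n + 1 : ℕ) : ℝ) / √((n + 1 : ℕ) : ℝ) else 0)
          = (if Nat.Prime (n + 1) then Real.log ((n + 1 : ℕ) : ℝ) else 0) / √((n + 1 : ℕ) : ℝ) := by
        split_ifs <;> simp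
      rw [h3]
      set T := ∑ a ∈ Finset.Icc 1 n, if Nat.Prime a then Real.log (a : ℝ) else 0
      have hT : T ≤ Real.log 4 * n := hθ n
      -- the new prime's term cancels against the increment of `θ`
      suffices h : T / √n + Real.log 4 * √n ≤ T / √((n + 1 : ℕ) : ℝ) + Real.log 4 * √((n + 1 : ℕ) : ℝ) by
        linarith
      rcases Nat.eq_zero_or_pos n with rfl | hn
      · simp [T, hlog4]
      have hs : 0 < √(n : ℝ) := Real.sqrt_pos.mpr (by exact_mod_cast hn)
      have hst : √(n : ℝ) ≤ √((n + 1 : ℕ) : ℝ) := Real.sqrt_le_sqrt (by push_cast; linarith)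
      have hss : √(n : ℝ) * √(n : ℝ) = n := Real.mul_self_sqrt (by positivity)
      rw [← hss] at hT
      generalize √((n + 1 : ℕ) : ℝ) = t at *
      generalize √(n : ℝ) = s at *
      have ht : 0 < t := hs.trans_le hst
      have h5 : T / s - T / t ≤ Real.log 4 * (t - s) := by
        have : T / s - T / t = T * (t - s) / (s * t) := by field_simp
        rw [this, div_le_iff₀ (by positivity)]
        have h6 : T * (t - s) ≤ Real.log 4 * (s * s) * (t - s) :=
          mul_le_mul_of_nonneg_right hT (by linarith)
        have h7 : 0 ≤ Real.log 4 * (t - s) * s * (t - s) := by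
          have : 0 ≤ t - s := by linarith
          positivity
        nlinarith
      linarith
  refine key.trans ?_
  have : (∑ p ∈ (Finset.Icc 1 n).filter Nat.Prime, Real.log p) / √n ≤ Real.log 4 * √n := by
    rcases Nat.eq_zero_or_pos n with rfl | hn
    · simp
    have hs : 0 < √(n : ℝ) := Real.sqrt_pos.mpr (by exact_mod_cast hn)
    rw [div_le_iff₀ hs, mul_assoc, Real.mul_self_sqrt (by positivity)]
    exact hθ n
  linarith

lemma sum_log_primeFactors_le (m : ℕ) (hm : 0 < m) :
    ∑ p ∈ m.primeFactors, Real.log p ≤ Real.log m := by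
  rw [← Real.log_prod (fun p hp => by exact_mod_cast (Nat.prime_of_mem_primeFactors hp).ne_zero)]
  rw [← Nat.cast_prod]
  have h := Nat.le_of_dvd hm (Nat.prod_primeFactors_dvd m)
  have h0 : 0 < ∏ p ∈ m.primeFactors, p :=
    Finset.prod_pos fun p hp => (Nat.prime_of_mem_primeFactors hp).pos
  exact Real.log_le_log (by exact_mod_cast h0) (by exact_mod_cast h)

/-- The prime factors are split at `√L` and at `z = (L / 4000)²`. Those up to `√L` are bounded in
number; between `√L` and `z` a factor `2 log p / log L ≥ 1` is inserted to apply
`sum_log_div_sqrt_le`; beyond `z` one has `p ^ (-σ) ≤ z ^ (-σ) log p / log L`, and the sum of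
`log p` is at most `log m`. The conclusion keeps the factor `7` with which the sum enters Rankin's
bound. -/
lemma sum_primeFactors_rpow_le {L : ℝ} (hL : 16000000 ≤ L) (hl : 4 ≤ Real.log L)
    (hLl : √L * Real.log L ≤ L / 25) (m : ℕ) (hm : 0 < m)
    (hmL : Real.log m ≤ 2 * (1 / 10000000) * L ^ 2) :
    7 * ∑ p ∈ m.primeFactors, (p : ℝ) ^ (-(1 / 2 - 1 / Real.log L)) ≤
      7 / 16 * (L / Real.log L) := by
  set l := Real.log L with hldef
  have hL0 : 0 < L := by linarith
  have hl0 : 0 < l := by linarith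
  have hexp : Real.exp 2 ≤ 8 := by
    have h1 := Real.exp_one_lt_d9
    have h2 : Real.exp 2 = Real.exp 1 * Real.exp 1 := by rw [← Real.exp_add]; norm_num
    rw [h2]
    nlinarith [Real.exp_pos 1]
  have hlog4 : Real.log 4 ≤ 1.4 := by
    have h1 := Real.log_two_lt_d9
    have h2 : Real.log 4 = 2 * Real.log 2 := by
      rw [show (4 : ℝ) = 2 ^ 2 by norm_num, Real.log_pow]; norm_num
    rw [h2]; linarith
  set z : ℝ := (L / 4000) ^ 2 with hz
  have hz0 : 0 < z := by positivity
  have hzs : √z = L / 4000 := Real.sqrt_sq (by positivity)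
  have hzL : L ≤ z := by rw [hz]; nlinarith
  have hzL2 : z ≤ L ^ 2 := by rw [hz]; nlinarith
  -- the factor `p ^ (1 / log L)` is bounded on `p ≤ L ^ 2`
  have hbd : ∀ t : ℝ, 0 < t → t ≤ L ^ 2 → t ^ (-(1 / 2 - 1 / l)) ≤ 8 / √t := by
    intro t ht htL
    have h1 : t ^ (1 / l) ≤ Real.exp 2 := by
      rw [Real.rpow_def_of_pos ht, Real.exp_le_exp, mul_one_div, div_le_iff₀ hl0]
      have := Real.log_le_log ht htL
      rw [Real.log_pow] at this
      exact_mod_cast this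
    have h2 : t ^ (-(1 / 2 - 1 / l)) = t ^ (1 / l) / √t := by
      rw [Real.sqrt_eq_rpow, ← Real.rpow_sub ht]; congr 1; ring
    rw [h2]
    gcongr
    linarith
  have hσ : 0 ≤ 1 / 2 - 1 / l := by
    have : 1 / l ≤ 1 / 4 := one_div_le_one_div_of_le (by norm_num) hl
    linarith
  have hpt : ∀ p ∈ m.primeFactors, (p : ℝ) ^ (-(1 / 2 - 1 / l)) ≤
      (if (p : ℝ) ≤ √L then 1 else 0) +
      (if (p : ℝ) ≤ z then 16 / l * (Real.log p / √p) else 0) +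
      32000 / (L * l) * Real.log p := by
    intro p hp
    have hp1 : (1 : ℝ) ≤ p := by exact_mod_cast (Nat.prime_of_mem_primeFactors hp).one_le
    have hlogp : 0 ≤ Real.log p := Real.log_nonneg hp1
    have hB : 0 ≤ (if (p : ℝ) ≤ z then 16 / l * (Real.log p / √p) else 0) := by
      split_ifs <;> positivity
    have hC : 0 ≤ 32000 / (L * l) * Real.log p := by positivity
    by_cases h1 : (p : ℝ) ≤ √L
    · have : (p : ℝ) ^ (-(1 / 2 - 1 / l)) ≤ 1 :=
        Real.rpow_le_one_of_one_le_of_nonpos hp1 (by linarith)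
      rw [if_pos h1]
      linarith
    rw [if_neg h1]
    push Not at h1
    by_cases h2 : (p : ℝ) ≤ z
    · rw [if_pos h2]
      have h3 := hbd p (by linarith) (h2.trans hzL2)
      have h4 : l / 2 ≤ Real.log p := by
        have := Real.log_le_log (Real.sqrt_pos.mpr hL0) h1.le
        rwa [Real.log_sqrt hL0.le] at this
      have h5 : 8 / √(p : ℝ) ≤ 16 / l * (Real.log p / √p) := by
        rw [div_mul_div_comm, div_le_div_iff₀ (by positivity) (by positivity)]
        nlinarith [Real.sqrt_pos.mpr (show (0 : ℝ) < p by linarith)]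
      linarith
    · rw [if_neg h2]
      push Not at h2
      have h3 := hbd z hz0 hzL2
      have h4 : (p : ℝ) ^ (-(1 / 2 - 1 / l)) ≤ z ^ (-(1 / 2 - 1 / l)) :=
        Real.rpow_le_rpow_of_nonpos hz0 h2.le (by linarith)
      have h5 : l ≤ Real.log p := Real.log_le_log hL0 (hzL.trans h2.le)
      have h6 : 8 / √z ≤ 32000 / (L * l) * Real.log p := by
        rw [hzs, div_mul_eq_mul_div, div_le_div_iff₀ (by positivity) (by positivity)]
        nlinarith
      linarith
  have hsum := Finset.sum_le_sum hpt
  rw [Finset.sum_add_distrib, Finset.sum_add_distrib, ← Finset.mul_sum] at hsum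
  have hA : ∑ p ∈ m.primeFactors, (if (p : ℝ) ≤ √L then (1 : ℝ) else 0) ≤ √L := by
    rw [Finset.sum_boole]
    have hsub : (m.primeFactors.filter fun p : ℕ => (p : ℝ) ≤ √L) ⊆ Finset.Icc 1 ⌊√L⌋₊ := by
      intro p hp
      rw [Finset.mem_filter] at hp
      exact Finset.mem_Icc.mpr ⟨(Nat.prime_of_mem_primeFactors hp.1).one_le, Nat.le_floor hp.2⟩
    have h1 := Finset.card_le_card hsub
    rw [Nat.card_Icc, Nat.add_sub_cancel] at h1
    exact (Nat.cast_le.mpr h1).trans (Nat.floor_le (Real.sqrt_nonneg _))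
  have hB : ∑ p ∈ m.primeFactors, (if (p : ℝ) ≤ z then 16 / l * (Real.log p / √p) else 0) ≤
      16 / l * (2 * 1.4 * (L / 4000)) := by
    rw [← Finset.sum_filter, ← Finset.mul_sum]
    gcongr
    calc _ ≤ ∑ p ∈ (Finset.Icc 1 ⌊z⌋₊).filter Nat.Prime, Real.log p / √p := by
          refine Finset.sum_le_sum_of_subset_of_nonneg ?_ ?_
          · intro p hp
            rw [Finset.mem_filter] at hp
            have hpp := Nat.prime_of_mem_primeFactors hp.1
            exact Finset.mem_filter.mpr
              ⟨Finset.mem_Icc.mpr ⟨hpp.one_le, Nat.le_floor hp.2⟩, hpp⟩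
          · intro p hp _
            exact div_nonneg (Real.log_natCast_nonneg p) (Real.sqrt_nonneg _)
      _ ≤ 2 * Real.log 4 * √(⌊z⌋₊ : ℝ) := sum_log_div_sqrt_le _
      _ ≤ 2 * 1.4 * √z := by
          gcongr
          exact Nat.floor_le hz0.le
      _ = _ := by rw [hzs]
  have hC : 32000 / (L * l) * ∑ p ∈ m.primeFactors, Real.log p ≤
      32000 / (L * l) * (2 * (1 / 10000000) * L ^ 2) := by
    gcongr
    exact (sum_log_primeFactors_le m hm).trans hmL
  have hB' : 16 / l * (2 * 1.4 * (L / 4000)) = 0.0112 * (L / l) := by field_simp; norm_num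
  have hC' : 32000 / (L * l) * (2 * (1 / 10000000) * L ^ 2) = 0.0064 * (L / l) := by
    field_simp; norm_num
  have hA' : √L ≤ 0.04 * (L / l) := by
    rw [← mul_div_assoc, le_div_iff₀ hl0]; linarith
  have hw : 0 < L / l := by positivity
  linarith

/-! ### Counting the factors close to one -/

lemma abs_cos_le (t : ℝ) : |Real.cos (π * t)| ≤ Real.exp (-2 * (t - round t) ^ 2) := by
  have h0 : |Real.cos (π * t)| = |Real.cos (π * (t - round t))| := by
    have : π * t = π * (t - round t) + (round t : ℤ) * π := by ring
    rw [this, Real.cos_add_int_mul_pi, abs_mul]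
    simp [abs_zpow]
  rw [h0]
  set u := t - round t
  have hu : |u| ≤ 1 / 2 := abs_sub_round t
  have h1 : 2 / π * |π * u| ≤ |Real.sin (π * u)| := by
    apply Real.mul_abs_le_abs_sin
    rw [abs_mul, abs_of_pos Real.pi_pos]
    nlinarith [Real.pi_pos]
  rw [abs_mul, abs_of_pos Real.pi_pos] at h1
  have h2 : 2 * |u| ≤ |Real.sin (π * u)| := by
    have : 2 / π * (π * |u|) = 2 * |u| := by field_simp
    linarith
  have h3 : 4 * u ^ 2 ≤ Real.sin (π * u) ^ 2 := by
    have := mul_self_le_mul_self (by positivity) h2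
    rw [← sq_abs (Real.sin _), ← sq_abs u]; nlinarith
  refine abs_le_of_sq_le_sq ?_ (Real.exp_pos _).le
  rw [← Real.exp_nat_mul]
  have := Real.add_one_le_exp (-4 * u ^ 2)
  have h4 := Real.sin_sq_add_cos_sq (π * u)
  calc _ ≤ -4 * u ^ 2 + 1 := by linarith
    _ ≤ _ := by refine this.trans (le_of_eq ?_); congr 1; push_cast; ring

/-- If `x / b n` is within `H / M` of an integer `k`, then `b n` divides `b n * k`, an integer
within `H` of `x`. Such integers number at most `2 H + 1 ≤ 3 H`, each having at most `D` divisors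
up to `M`. -/
lemma card_near_le (N : ℕ) (b : ℕ → ℕ) {x H D M : ℝ}
    (hb_inj : Set.InjOn b (Finset.Icc 1 N : Finset ℕ))
    (hb_pos : ∀ n ∈ Finset.Icc 1 N, 0 < b n)
    (hb_le : ∀ n ∈ Finset.Icc 1 N, (b n : ℝ) ≤ M)
    (hM : 0 < M) (hH : 1 ≤ H) (hHx : H < x)
    (hD : ∀ m : ℕ, 0 < m → (m : ℝ) ≤ x + H →
      (((m.divisors.filter fun d : ℕ => (d : ℝ) ≤ M).card : ℕ) : ℝ) ≤ D) :
    ((((Finset.Icc 1 N).filter fun n => |x / b n - round (x / b n)| < H / M).card : ℕ) : ℝ) ≤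
      3 * H * D := by
  set I := Finset.Icc ⌈x - H⌉₊ ⌊x + H⌋₊ with hI
  have hImem : ∀ m ∈ I, 0 < m ∧ (m : ℝ) ≤ x + H := by
    intro m hm
    rw [hI, Finset.mem_Icc] at hm
    refine ⟨lt_of_lt_of_le (Nat.ceil_pos.mpr (by linarith)) hm.1, ?_⟩
    exact (Nat.le_floor_iff (by linarith)).mp hm.2
  have hsub : ((Finset.Icc 1 N).filter fun n => |x / b n - round (x / b n)| < H / M) ⊆
      I.biUnion fun m => (Finset.Icc 1 N).filter fun n => b n ∣ m := by
    intro n hn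
    rw [Finset.mem_filter] at hn
    obtain ⟨hnN, hn⟩ := hn
    have hb0 : (0 : ℝ) < b n := by exact_mod_cast hb_pos n hnN
    have hr0 : 0 ≤ round (x / b n) := by
      rw [round_eq]
      exact Int.floor_nonneg.mpr (by have : 0 < x / b n := div_pos (by linarith) hb0
                                     linarith)
    obtain ⟨k, hk⟩ := Int.eq_ofNat_of_zero_le hr0
    rw [hk] at hn
    have h1 : |x - ((b n * k : ℕ) : ℝ)| < H := by
      have e : x - ((b n * k : ℕ) : ℝ) = b n * (x / b n - ((k : ℤ) : ℝ)) := by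
        push_cast; field_simp
      rw [e, abs_mul, abs_of_pos hb0]
      calc _ < b n * (H / M) := by gcongr
        _ ≤ M * (H / M) := by gcongr; exact hb_le n hnN
        _ = H := by field_simp
    rw [abs_lt] at h1
    refine Finset.mem_biUnion.mpr ⟨b n * k, Finset.mem_Icc.mpr ⟨?_, ?_⟩,
      Finset.mem_filter.mpr ⟨hnN, Dvd.intro _ rfl⟩⟩
    · exact Nat.ceil_le.mpr (by linarith)
    · exact Nat.le_floor (by linarith)
  have hcard : ∀ m ∈ I, ((((Finset.Icc 1 N).filter fun n => b n ∣ m).card : ℕ) : ℝ) ≤ D := by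
    intro m hm
    obtain ⟨hm0, hmx⟩ := hImem m hm
    refine le_trans ?_ (hD m hm0 hmx)
    refine Nat.cast_le.mpr (Finset.card_le_card_of_injOn b ?_ ?_)
    · intro n hn
      rw [Finset.mem_coe, Finset.mem_filter] at hn
      exact Finset.mem_coe.mpr (Finset.mem_filter.mpr
        ⟨Nat.mem_divisors.mpr ⟨hn.2, hm0.ne'⟩, hb_le n hn.1⟩)
    · exact hb_inj.mono (by exact_mod_cast Finset.filter_subset _ _)
  have hDnn : 0 ≤ D := le_trans (Nat.cast_nonneg _) (hD 1 one_pos (by push_cast; linarith))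
  have hIcard : (I.card : ℝ) ≤ 3 * H := by
    rw [hI, Nat.card_Icc]
    have h1 : (⌊x + H⌋₊ : ℝ) ≤ x + H := Nat.floor_le (by linarith)
    have h2 : x - H ≤ (⌈x - H⌉₊ : ℝ) := Nat.le_ceil _
    rcases le_total ⌈x - H⌉₊ (⌊x + H⌋₊ + 1) with h | h
    · rw [Nat.cast_sub h]; push_cast; linarith
    · rw [Nat.sub_eq_zero_of_le h]; push_cast; linarith
  calc _ ≤ (((I.biUnion fun m => (Finset.Icc 1 N).filter fun n => b n ∣ m).card : ℕ) : ℝ) :=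
        Nat.cast_le.mpr (Finset.card_le_card hsub)
    _ ≤ ((∑ m ∈ I, ((Finset.Icc 1 N).filter fun n => b n ∣ m).card : ℕ) : ℝ) :=
        Nat.cast_le.mpr Finset.card_biUnion_le
    _ = ∑ m ∈ I, ((((Finset.Icc 1 N).filter fun n => b n ∣ m).card : ℕ) : ℝ) := by push_cast; rfl
    _ ≤ ∑ m ∈ I, D := Finset.sum_le_sum hcard
    _ = I.card * D := by rw [Finset.sum_const, nsmul_eq_mul]
    _ ≤ _ := by gcongr

/-- If at least half of the `x / b n` are at distance at least `δ` from the integers, each of the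
corresponding factors is at most `exp (-2 δ²)`. -/
lemma abs_prod_cos_le (N : ℕ) (b : ℕ → ℕ) {x δ : ℝ} (hδ : 0 ≤ δ)
    (h : ((((Finset.Icc 1 N).filter fun n => |x / b n - round (x / b n)| < δ).card : ℕ) : ℝ) ≤
      N / 2) :
    |∏ n ∈ Finset.Icc 1 N, Real.cos (π * x / (b n : ℝ))| ≤ Real.exp (-(N * δ ^ 2)) := by
  rw [Finset.abs_prod]
  calc _ ≤ ∏ n ∈ Finset.Icc 1 N, Real.exp (-2 * (x / b n - round (x / b n)) ^ 2) := by
        refine Finset.prod_le_prod (fun _ _ => abs_nonneg _) fun n _ => ?_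
        rw [mul_div_assoc]
        exact abs_cos_le _
    _ = Real.exp (-2 * ∑ n ∈ Finset.Icc 1 N, (x / b n - round (x / b n)) ^ 2) := by
        rw [← Real.exp_sum, Finset.mul_sum]
    _ ≤ _ := by
        rw [Real.exp_le_exp]
        have hc := Finset.card_filter_add_card_filter_not (s := Finset.Icc 1 N)
          (fun n => |x / b n - round (x / b n)| < δ)
        rw [Nat.card_Icc, Nat.add_sub_cancel] at hc
        have hc' : (N : ℝ) / 2 ≤ (((Finset.Icc 1 N).filter
            fun n => ¬ |x / b n - round (x / b n)| < δ).card : ℕ) := by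
          have : (N : ℝ) = _ := (congrArg (Nat.cast (R := ℝ)) hc).symm
          push_cast at this
          linarith
        have h1 : (N : ℝ) / 2 * δ ^ 2 ≤
            ∑ n ∈ Finset.Icc 1 N, (x / b n - round (x / b n)) ^ 2 := by
          calc _ ≤ (((Finset.Icc 1 N).filter
            fun n => ¬ |x / b n - round (x / b n)| < δ).card : ℝ) * δ ^ 2 := by gcongr
            _ = ∑ n ∈ (Finset.Icc 1 N).filter
                fun n => ¬ |x / b n - round (x / b n)| < δ, δ ^ 2 := by
                rw [Finset.sum_const, nsmul_eq_mul]
            _ ≤ ∑ n ∈ (Finset.Icc 1 N).filter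
                fun n => ¬ |x / b n - round (x / b n)| < δ,
                  (x / b n - round (x / b n)) ^ 2 := by
                refine Finset.sum_le_sum fun n hn => ?_
                rw [Finset.mem_filter, not_lt] at hn
                rw [← sq_abs (x / b n - round (x / b n))]
                exact pow_le_pow_left₀ hδ hn.2 2
            _ ≤ _ := Finset.sum_le_sum_of_subset_of_nonneg (Finset.filter_subset _ _)
                fun _ _ _ => sq_nonneg _
        linarith

/-- The size conditions on `L = log N`; the last one makes the final exponent exceed
`A log x`. -/
lemma eventually_large (A : ℝ) : ∀ᶠ L : ℝ in atTop, 16000000 ≤ L ∧ 4 ≤ Real.log L ∧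
    √L * Real.log L ≤ L / 25 ∧ A * (1 / 10000000 * L ^ 2) < Real.exp √L / 36 := by
  have h1 : ∀ᶠ L : ℝ in atTop, √L * Real.log L ≤ L / 25 := by
    have h := (isLittleO_log_rpow_atTop (show (0 : ℝ) < 1 / 2 by norm_num)).bound
      (show (0 : ℝ) < 1 / 25 by norm_num)
    filter_upwards [h, eventually_ge_atTop 1] with L hL hL1
    rw [Real.norm_of_nonneg (Real.log_nonneg hL1), Real.norm_of_nonneg (by positivity),
      ← Real.sqrt_eq_rpow] at hL
    nlinarith [Real.mul_self_sqrt (show 0 ≤ L by linarith), Real.sqrt_nonneg L]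
  have h2 : ∀ᶠ L : ℝ in atTop, A * (1 / 10000000 * L ^ 2) < Real.exp √L / 36 := by
    have ht := ((Real.tendsto_pow_mul_exp_neg_atTop_nhds_zero 4).comp
      Real.tendsto_sqrt_atTop).const_mul (36 * A * (1 / 10000000))
    rw [mul_zero] at ht
    filter_upwards [ht.eventually_lt_const one_pos, eventually_ge_atTop 0] with L hL hL0
    simp only [Function.comp] at hL
    have e : √L ^ 4 = L ^ 2 := by
      rw [show 4 = 2 * 2 by norm_num, pow_mul, Real.sq_sqrt hL0]
    rw [e, Real.exp_neg, ← mul_assoc, ← div_eq_mul_inv, div_lt_one (Real.exp_pos _)] at hL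
    linarith
  filter_upwards [eventually_ge_atTop 16000000, Real.tendsto_log_atTop.eventually_ge_atTop 4,
    h1, h2] with L a b c d using ⟨a, b, c, d⟩

/-! ### Choice of parameters -/

/-- **Proposition (polynomial decay of `ϱ_N`).**
Let `β : ℕ → ℝ` be decreasing with `β n → 0` and `β n ≤ 1/(8 log log n)` for all
sufficiently large `n`, and let `(b n)_{n ≥ 1}` be a strictly increasing sequence
of positive integers with `n ≤ b n ≤ n ^ (1 + β n)`. Then for every fixed `A > 0`
there is `C' > 0` such that for all sufficiently large `N` and all
`x ∈ [N, exp (C' (log N)²)]` one has `|ϱ_N(x)| < x^{−A}`, where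
`ϱ_N(x) = ∏_{n=1}^N cos (π x / b n)`. -/
theorem rho_N_polynomial_decay
    (β : ℕ → ℝ) (hβ_anti : Antitone β)
    (hβ_lim : Tendsto β atTop (nhds 0))
    (hβ_le : ∀ᶠ n : ℕ in atTop, β n ≤ 1 / (8 * Real.log (Real.log n)))
    (b : ℕ → ℕ)
    (hb_mono : ∀ m n : ℕ, 1 ≤ m → m < n → b m < b n)
    (hb_pos : ∀ n : ℕ, 1 ≤ n → 0 < b n)
    (hb_lb : ∀ n : ℕ, 1 ≤ n → (n : ℝ) ≤ b n)
    (hb_ub : ∀ n : ℕ, 1 ≤ n → (b n : ℝ) ≤ (n : ℝ) ^ (1 + β n))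
    (A : ℝ) (hA : 0 < A) :
    ∃ C' : ℝ, 0 < C' ∧ ∃ N₀ : ℕ, ∀ N : ℕ, N₀ ≤ N →
      ∀ x ∈ Set.Icc (N : ℝ) (Real.exp (C' * Real.log N ^ 2)),
        |∏ n ∈ Finset.Icc 1 N, Real.cos (π * x / (b n : ℝ))| < x ^ (-A) := by
  refine ⟨1 / 10000000, by norm_num, ?_⟩
  rw [← eventually_atTop]
  have hlogN : Tendsto (fun N : ℕ => Real.log N) atTop atTop :=
    Real.tendsto_log_atTop.comp tendsto_natCast_atTop_atTop
  filter_upwards [hβ_le, hlogN.eventually (eventually_large A), eventually_ge_atTop 1]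
    with N hβN hLN hN1 x hx
  set L := Real.log N with hL_def
  obtain ⟨hL, hl, hLl, hLA⟩ := hLN
  set l := Real.log L with hl_def
  have hN0 : (0 : ℝ) < N := by exact_mod_cast hN1
  have hNexp : (N : ℝ) = Real.exp L := (Real.exp_log hN0).symm
  have hl0 : 0 < l := by linarith
  have hL0 : 0 < L := by linarith
  set w := L / l with hw_def
  have hw0 : 0 < w := by positivity
  have hwl : w * l = L := by rw [hw_def]; field_simp
  have hwL : w ≤ L := by nlinarith
  have hws : 25 * √L ≤ w := by rw [hw_def, le_div_iff₀ hl0]; linarith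
  -- `H` is chosen so that `3 * H * D = N / 2`
  set M := Real.exp (L + w / 8) with hM_def
  set H := Real.exp ((L + w) / 2) / 6 with hH_def
  set D := Real.exp ((L - w) / 2) with hD_def
  have hH1 : 1 ≤ H := by
    have := Real.add_one_le_exp ((L + w) / 2)
    rw [hH_def]; linarith
  have hHN : H ≤ N / 2 := by
    have : Real.exp ((L + w) / 2) ≤ Real.exp L := Real.exp_le_exp.mpr (by linarith)
    rw [hH_def, hNexp]
    linarith [Real.exp_pos L]
  have hxN := hx.1
  have hx0 : 0 < x := hN0.trans_le hxN
  have hlogx : Real.log x ≤ 1 / 10000000 * L ^ 2 := (Real.log_le_iff_le_exp hx0).mpr hx.2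
  have hbM : ∀ n ∈ Finset.Icc 1 N, (b n : ℝ) ≤ M := by
    intro n hn
    rw [Finset.mem_Icc] at hn
    have h1 : b n ≤ b N := by
      rcases hn.2.eq_or_lt with rfl | h
      · rfl
      · exact (hb_mono n N hn.1 h).le
    calc (b n : ℝ) ≤ b N := by exact_mod_cast h1
      _ ≤ (N : ℝ) ^ (1 + β N) := hb_ub N hN1
      _ = Real.exp (L * (1 + β N)) := Real.rpow_def_of_pos hN0 _
      _ ≤ M := by
        refine Real.exp_le_exp.mpr ?_
        have h2 : L * β N ≤ L * (1 / (8 * l)) := by gcongr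
        have h3 : L * (1 / (8 * l)) = w / 8 := by rw [hw_def]; field_simp
        linarith
  have hDbound : ∀ m : ℕ, 0 < m → (m : ℝ) ≤ x + H →
      (((m.divisors.filter fun d : ℕ => (d : ℝ) ≤ M).card : ℕ) : ℝ) ≤ D := by
    intro m hm hmx
    -- Rankin exponent `1/2 - 1/log L`: the shift gives `M ^ (-1 / log L) ≤ exp (-w)`
    have hσ : 1 / 4 ≤ 1 / 2 - 1 / l := by
      have : 1 / l ≤ 1 / 4 := one_div_le_one_div_of_le (by norm_num) hl
      linarith
    have hmlog : Real.log m ≤ 2 * (1 / 10000000) * L ^ 2 := by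
      have h1 : Real.log m ≤ Real.log (2 * x) :=
        Real.log_le_log (by exact_mod_cast hm) (by linarith)
      rw [Real.log_mul (by norm_num) hx0.ne'] at h1
      have := Real.log_two_lt_d9
      nlinarith
    refine (card_divisors_le_s9 hσ m hm (Real.exp_pos _)).trans ?_
    rw [← Real.exp_mul, ← Real.exp_add]
    refine Real.exp_le_exp.mpr ?_
    have h2 := sum_primeFactors_rpow_le hL hl hLl m hm hmlog
    have h3 : (L + w / 8) * (1 / 2 - 1 / l) = L / 2 + w / 16 - w - w / (8 * l) := by
      rw [hw_def]; field_simp; ring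
    have h4 : 0 < w / (8 * l) := by positivity
    rw [h3]
    linarith
  have hinj : Set.InjOn b (Finset.Icc 1 N : Finset ℕ) := by
    intro i hi j hj hij
    simp only [Finset.coe_Icc, Set.mem_Icc] at hi hj
    rcases lt_trichotomy i j with h | h | h
    · exact absurd hij (hb_mono i j hi.1 h).ne
    · exact h
    · exact absurd hij (hb_mono j i hj.1 h).ne'
  have hcount := card_near_le N b hinj (fun n hn => hb_pos n (Finset.mem_Icc.mp hn).1) hbM
    (Real.exp_pos _) hH1 (by linarith) hDbound
  have hHD : 3 * H * D = N / 2 := by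
    have : Real.exp ((L + w) / 2) * Real.exp ((L - w) / 2) = Real.exp L := by
      rw [← Real.exp_add]; congr 1; ring
    rw [hH_def, hD_def, hNexp, ← this]; ring
  rw [hHD] at hcount
  refine (abs_prod_cos_le N b (by positivity) hcount).trans_lt ?_
  rw [Real.rpow_def_of_pos hx0, Real.exp_lt_exp]
  have hmain : (N : ℝ) * (H / M) ^ 2 = Real.exp (3 * w / 4) / 36 := by
    have : Real.exp (3 * w / 4) =
        Real.exp L * (Real.exp ((L + w) / 2) * Real.exp (-(L + w / 8))) ^ 2 := by
      rw [← Real.exp_add, ← Real.exp_nat_mul, ← Real.exp_add]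
      congr 1; push_cast; ring
    rw [this, hH_def, hM_def, hNexp, Real.exp_neg]
    ring
  have hexp : Real.exp √L ≤ Real.exp (3 * w / 4) :=
    Real.exp_le_exp.mpr (by linarith [Real.sqrt_nonneg L])
  have h5 : A * Real.log x ≤ A * (1 / 10000000 * L ^ 2) := by gcongr
  rw [hmain]
  linarith
end
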